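/- arXiv:1203.2445 — 3 statements merged into one kernel-verified Lean document; each statement's English description precedes it below -/
import Mathlib

section
/- Let 0 < s < 2 and let f : [-1,1] → ℝ be a continuous function of class X^s. Then there is a constant C > 0 (depending only on f and s) such that for every n ≥ 1 the error of the n-point Gauss rule satisfies |E_n^G(f)| ≤ C · n^{-3s/2}. -/
/-- The `m`-th Chebyshev coefficient of `f`:
`a_m = (2/π) ∫_0^π f(cos θ) cos(mθ) dθ`. -/
noncomputable def chebCoeff (f : ℝ → ℝ) (m : ℕ) : ℝ :=
  (2 / Real.pi) * ∫ θ in (0:ℝ)..Real.pi, f (Real.cos θ) * Real.cos (m * θ)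

section
open Polynomial


lemma gq_int_sq_zero (R : ℝ[X]) (h : ∫ t in (-1:ℝ)..1, R.eval t * R.eval t = 0) : R = 0 := by
  by_contra hR
  have hc : Continuous (fun t : ℝ => R.eval t * R.eval t) := by fun_prop
  have h2 : ∀ t ∈ Set.Icc (-1:ℝ) 1, R.eval t * R.eval t = 0 := by
    intro t ht
    by_contra hne
    have : 0 < ∫ t in (-1:ℝ)..1, R.eval t * R.eval t := by
      apply intervalIntegral.integral_pos (by norm_num) hc.continuousOn
      · intro x _; exact mul_self_nonneg _
      · exact ⟨t, ht, lt_of_le_of_ne (mul_self_nonneg _) (Ne.symm hne)⟩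
    linarith
  apply hR
  apply Polynomial.eq_zero_of_infinite_isRoot
  apply Set.Infinite.mono (s := Set.Icc (-1:ℝ) 1)
  · intro t ht
    exact mul_self_eq_zero.mp (h2 t ht)
  · exact Set.Icc_infinite (by norm_num)

lemma gq_ftc (r : ℝ[X]) : ∫ t in (-1:ℝ)..1, (derivative r).eval t = r.eval 1 - r.eval (-1) := by
  apply intervalIntegral.integral_eq_sub_of_hasDerivAt (f := fun t => r.eval t)
  · intro x _; exact r.hasDerivAt x
  · exact (Polynomial.continuous _).intervalIntegrable _ _

lemma gq_selfadj (p q : ℝ[X]) :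
    ∫ t in (-1:ℝ)..1, (derivative ((1 - X^2) * derivative p) * q).eval t
      = ∫ t in (-1:ℝ)..1, (p * derivative ((1 - X^2) * derivative q)).eval t := by
  have h := gq_ftc ((1 - X^2) * (derivative p * q - p * derivative q))
  have e : derivative ((1 - X^2) * (derivative p * q - p * derivative q))
     = derivative ((1 - X^2) * derivative p) * q - p * derivative ((1 - X^2) * derivative q) := by
    simp only [derivative_mul, derivative_sub]; ring
  rw [e] at h
  simp only [eval_sub (p := derivative ((1 - X^2) * derivative p) * q)] at h
  rw [intervalIntegral.integral_sub] at h
  · have : eval 1 ((1 - X^2) * (derivative p * q - p * derivative q)) = 0 := by simp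
    have h2 : eval (-1) ((1 - X^2) * (derivative p * q - p * derivative q)) = 0 := by simp
    rw [this, h2] at h; linarith
  · exact (Polynomial.continuous _).intervalIntegrable _ _
  · exact (Polynomial.continuous _).intervalIntegrable _ _

lemma gq_ode (n : ℕ) (P : ℝ[X]) (hd : P.natDegree = n)
    (ho : ∀ q : ℝ[X], q.degree < n → ∫ t in (-1:ℝ)..1, (P * q).eval t = 0) :
    derivative ((1 - X^2) * derivative P) + C ((n:ℝ) * (n+1)) * P = 0 := by
  set R := derivative ((1 - X^2) * derivative P) + C ((n:ℝ) * (n+1)) * P with hR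
  have coeffL : ∀ (q : ℝ[X]) (m : ℕ), (derivative ((1 - X^2) * derivative q)).coeff m
      = (m+2)*(m+1) * q.coeff (m+2) - m*(m+1) * q.coeff m := by
    intro q m
    have : (1 - X^2) * derivative q = derivative q - X * (X * derivative q) := by ring
    rw [this, derivative_sub, coeff_sub, coeff_derivative, coeff_derivative, coeff_derivative,
      coeff_X_mul]
    rcases m with _ | m
    · simp; ring
    · rw [coeff_X_mul, coeff_derivative]; push_cast; ring
  have hRd : R.degree < n := by
    rw [degree_lt_iff_coeff_zero]
    intro m hmn
    rw [hR, coeff_add, coeffL, coeff_C_mul]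
    have h1 : P.coeff (m+2) = 0 := coeff_eq_zero_of_natDegree_lt (by omega)
    rcases eq_or_lt_of_le hmn with h | h
    · subst h; rw [h1]; ring
    · rw [h1, coeff_eq_zero_of_natDegree_lt (by omega)]; ring
  have hLd : (derivative ((1 - X^2) * derivative R)).degree < n := by
    rw [degree_lt_iff_coeff_zero] at hRd ⊢
    intro m hmn
    rw [coeffL, hRd m hmn, hRd (m+2) (by omega)]; ring
  apply gq_int_sq_zero
  have e1 := gq_selfadj P R
  rw [ho _ hLd] at e1
  have e2 := ho _ hRd
  have : ∀ t, R.eval t * R.eval t = (derivative ((1 - X^2) * derivative P) * R).eval t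
      + ((n:ℝ) * (n+1)) * (P * R).eval t := by
    intro t
    rw [← eval_mul]; nth_rw 1 [hR]; rw [add_mul, eval_add, mul_assoc (C _), eval_mul (p := C _), eval_C]
  simp_rw [this]
  rw [intervalIntegral.integral_add, e1, intervalIntegral.integral_const_mul, e2]
  · ring
  · exact (Polynomial.continuous _).intervalIntegrable _ _
  · exact (continuous_const.mul (Polynomial.continuous _)).intervalIntegrable _ _

lemma gq_parity (n : ℕ) (P : ℝ[X]) (hd : P.natDegree = n)
    (ho : ∀ q : ℝ[X], q.degree < n → ∫ t in (-1:ℝ)..1, (P * q).eval t = 0) :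
    P.comp (-X) = C ((-1)^n) * P := by
  rw [← sub_eq_zero]
  set R := P.comp (-X) - C ((-1)^n) * P with hR
  have cc : ∀ (q : ℝ[X]) (m : ℕ), (q.comp (-X)).coeff m = (-1)^m * q.coeff m := by
    intro q m
    have : (-X : ℝ[X]) = C (-1) * X := by simp
    rw [this, comp_C_mul_X_coeff]; ring
  have hRd : R.degree < n := by
    rw [degree_lt_iff_coeff_zero]
    intro m hmn
    rw [hR, coeff_sub, cc, coeff_C_mul]
    rcases eq_or_lt_of_le hmn with h | h
    · subst h; ring
    · rw [coeff_eq_zero_of_natDegree_lt (by omega)]; ring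
  have hRc : (R.comp (-X)).degree < n := by
    rw [degree_lt_iff_coeff_zero] at hRd ⊢
    intro m hmn
    rw [cc, hRd m hmn]; ring
  apply gq_int_sq_zero
  have e1 := ho _ hRd
  have e2 := ho _ hRc
  have e3 : ∫ t in (-1:ℝ)..1, (P * R.comp (-X)).eval (-t) = 0 := by
    rw [intervalIntegral.integral_comp_neg (fun t => (P * R.comp (-X)).eval t)]
    simpa using e2
  have : ∀ t, R.eval t * R.eval t = (P * R.comp (-X)).eval (-t) - (-1)^n * (P * R).eval t := by
    intro t
    rw [← eval_mul]; nth_rw 1 [hR]; rw [sub_mul]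
    simp [eval_comp]
    ring
  simp_rw [this]
  rw [intervalIntegral.integral_sub, e3, intervalIntegral.integral_const_mul, e1]
  · ring
  · exact Continuous.intervalIntegrable (by fun_prop) _ _
  · exact Continuous.intervalIntegrable (by fun_prop) _ _


/-- Phase estimate for solutions of the Liouville normal form. -/
lemma gq_phase_aux (ν a : ℝ) (hν : 0 < ν) (ha : 0 < a) (ha2 : a ≤ Real.pi / 2) (u v : ℝ → ℝ)
    (hu : ∀ θ, 0 < θ → θ ≤ Real.pi/2 → HasDerivAt u (v θ) θ)
    (hv : ∀ θ, 0 < θ → θ ≤ Real.pi/2 → HasDerivAt v (-(ν^2 + 1/(4 * Real.sin θ^2)) * u θ) θ)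
    (B : ℝ) (hB : 0 ≤ B)
    (hB2 : B^2 = u (Real.pi/2)^2 + v (Real.pi/2)^2 / (ν^2 + 1/4)) :
    |u a| ≤ B ∧ (u a = 0 → |ν * u (Real.pi/2) * Real.cos (ν * (Real.pi/2 - a))
      - v (Real.pi/2) * Real.sin (ν * (Real.pi/2 - a))| ≤ B * (Real.cos a / Real.sin a) / 4) := by
  have hpi := Real.pi_pos
  have hsin : ∀ θ, 0 < θ → θ ≤ Real.pi/2 → 0 < Real.sin θ := fun θ h1 h2 =>
    Real.sin_pos_of_pos_of_lt_pi h1 (by linarith)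
  have sonin : ∀ b, 0 < b → b ≤ Real.pi/2 → |u b| ≤ B := by
    intro b hb hb2
    have hQ : ∀ θ, 0 < ν^2 + 1/(4 * Real.sin θ^2) := fun θ => by positivity
    have hΦ : ∀ θ, 0 < θ → θ ≤ Real.pi/2 →
        HasDerivAt (fun θ => u θ^2 + v θ^2 / (ν^2 + 1/(4 * Real.sin θ^2)))
          (v θ^2 * (Real.cos θ / (2 * Real.sin θ^3)) / (ν^2 + 1/(4 * Real.sin θ^2))^2) θ := by
      intro θ h1 h2
      have hs := hsin θ h1 h2
      have dQ : HasDerivAt (fun θ => ν^2 + 1/(4 * Real.sin θ^2))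
          (-(Real.cos θ / (2 * Real.sin θ^3))) θ := by
        have h4 : HasDerivAt (fun θ => 4 * Real.sin θ^2) (4 * (2 * Real.sin θ * Real.cos θ)) θ := by
          simpa using ((Real.hasDerivAt_sin θ).pow 2).const_mul 4
        have h5 := ((hasDerivAt_const θ (1:ℝ)).div h4 (by positivity)).const_add (ν^2)
        refine h5.congr_deriv ?_
        field_simp
        ring
      have h6 := ((hu θ h1 h2).pow 2).add (((hv θ h1 h2).pow 2).div dQ (hQ θ).ne')
      refine h6.congr_deriv ?_
      have := hQ θ
      generalize ν^2 + 1/(4 * Real.sin θ^2) = Q at *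
      simp
      field_simp
      ring
    have mono : MonotoneOn (fun θ => u θ^2 + v θ^2 / (ν^2 + 1/(4 * Real.sin θ^2)))
        (Set.Icc b (Real.pi/2)) := by
      apply monotoneOn_of_hasDerivWithinAt_nonneg (convex_Icc _ _)
        (f' := fun θ => (v θ^2 * (Real.cos θ / (2 * Real.sin θ^3)) / (ν^2 + 1/(4 * Real.sin θ^2))^2))
      · intro θ hθ
        exact (hΦ θ (by linarith [hθ.1]) hθ.2).continuousAt.continuousWithinAt
      · intro θ hθ
        rw [interior_Icc] at hθ
        exact (hΦ θ (by linarith [hθ.1]) hθ.2.le).hasDerivWithinAt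
      · intro θ hθ
        rw [interior_Icc] at hθ
        have := hsin θ (by linarith [hθ.1]) hθ.2.le
        have hc : 0 ≤ Real.cos θ := Real.cos_nonneg_of_mem_Icc ⟨by linarith [hθ.1], hθ.2.le⟩
        positivity
    have h7 := mono (Set.left_mem_Icc.2 hb2) (Set.right_mem_Icc.2 hb2) hb2
    simp only [Real.sin_pi_div_two] at h7
    norm_num at h7
    norm_num at hB2
    rw [← hB2] at h7
    apply abs_le_of_sq_le_sq _ hB
    have : 0 ≤ v b^2 / (ν^2 + 1/(4 * Real.sin b^2)) := div_nonneg (sq_nonneg _) (hQ b).le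
    norm_num at this
    linarith
  refine ⟨sonin a ha ha2, fun hua => ?_⟩
  set Y : ℝ → ℝ := fun θ => ν * u θ * Real.cos (ν * (θ - a)) - v θ * Real.sin (ν * (θ - a)) with hY
  have dY : ∀ θ, 0 < θ → θ ≤ Real.pi/2 →
      HasDerivAt Y (u θ * Real.sin (ν * (θ - a)) / (4 * Real.sin θ^2)) θ := by
    intro θ h1 h2
    have hs := hsin θ h1 h2
    have l : HasDerivAt (fun θ => ν * (θ - a)) ν θ := by
      simpa using ((hasDerivAt_id θ).sub_const a).const_mul ν
    have h6 := (((hu θ h1 h2).const_mul ν).mul l.cos).sub ((hv θ h1 h2).mul l.sin)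
    refine h6.congr_deriv ?_
    field_simp
    ring
  have dcot : ∀ θ, 0 < θ → θ ≤ Real.pi/2 →
      HasDerivAt (fun θ => B * (Real.cos θ / Real.sin θ) / 4) (-(B / (4 * Real.sin θ^2))) θ := by
    intro θ h1 h2
    have hs := hsin θ h1 h2
    have h6 := (((Real.hasDerivAt_cos θ).div (Real.hasDerivAt_sin θ) hs.ne').const_mul B).div_const 4
    refine h6.congr_deriv ?_
    field_simp
    linear_combination -B * Real.sin_sq_add_cos_sq θ
  have key : ∀ σ : ℝ, |σ| = 1 → σ * Y (Real.pi/2) ≤ B * (Real.cos a / Real.sin a) / 4 := by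
    intro σ hσ
    have anti : AntitoneOn (fun θ => σ * Y θ + B * (Real.cos θ / Real.sin θ) / 4)
        (Set.Icc a (Real.pi/2)) := by
      apply antitoneOn_of_hasDerivWithinAt_nonpos (convex_Icc _ _)
        (f' := fun θ => σ * (u θ * Real.sin (ν * (θ - a)) / (4 * Real.sin θ^2)) +
          (-(B / (4 * Real.sin θ^2))))
      · intro θ hθ
        exact (((dY θ (by linarith [hθ.1]) hθ.2).const_mul σ).add
          (dcot θ (by linarith [hθ.1]) hθ.2)).continuousAt.continuousWithinAt
      · intro θ hθ
        rw [interior_Icc] at hθ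
        exact (((dY θ (by linarith [hθ.1]) hθ.2.le).const_mul σ).add
          (dcot θ (by linarith [hθ.1]) hθ.2.le)).hasDerivWithinAt
      · intro θ hθ
        rw [interior_Icc] at hθ
        have hs := hsin θ (by linarith [hθ.1]) hθ.2.le
        have hub := sonin θ (by linarith [hθ.1]) hθ.2.le
        have : σ * (u θ * Real.sin (ν * (θ - a))) ≤ B := by
          refine (le_abs_self _).trans ?_
          rw [abs_mul, abs_mul, hσ, one_mul]
          calc _ ≤ |u θ| * 1 := by gcongr; exact Real.abs_sin_le_one _
            _ ≤ B := by linarith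
        have e : σ * (u θ * Real.sin (ν * (θ - a)) / (4 * Real.sin θ^2)) +
          (-(B / (4 * Real.sin θ^2))) = (σ * (u θ * Real.sin (ν * (θ - a))) - B) / (4 * Real.sin θ^2) := by
          ring
        simp only [e]
        apply div_nonpos_of_nonpos_of_nonneg (by linarith) (by positivity)
    have h7 := anti (Set.left_mem_Icc.2 ha2) (Set.right_mem_Icc.2 ha2) ha2
    have hYa : Y a = 0 := by simp [hY, hua]
    simp only [hYa, Real.cos_pi_div_two] at h7
    simpa using h7
  have k1 := key 1 (by simp)
  have k2 := key (-1) (by simp)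
  rw [abs_le]
  simp only [hY] at k1 k2
  constructor <;> linarith


lemma gq_node_half (n : ℕ) (P : ℝ[X]) (hP : P ≠ 0)
    (hode : derivative ((1 - X^2) * derivative P) + C ((n:ℝ) * (n+1)) * P = 0)
    (hpar : P.comp (-X) = C ((-1)^n) * P) (a : ℝ) (ha : 0 < a) (ha2 : a ≤ Real.pi/2)
    (hroot : P.eval (Real.cos a) = 0) :
    |Real.sin a * Real.cos ((2*n+1) * a)| ≤ 1 / (2*n+1) := by
  have hpi := Real.pi_pos
  have hsin : ∀ θ, 0 < θ → θ ≤ Real.pi/2 → 0 < Real.sin θ := fun θ h1 h2 =>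
    Real.sin_pos_of_pos_of_lt_pi h1 (by linarith)
  set ν : ℝ := n + 1/2 with hν
  have hν0 : 0 < ν := by positivity
  set P1 := derivative P with hP1
  set P2 := derivative P1 with hP2
  set u : ℝ → ℝ := fun θ => √(Real.sin θ) * P.eval (Real.cos θ) with hudef
  set v : ℝ → ℝ := fun θ => √(Real.sin θ) * (-Real.sin θ * P1.eval (Real.cos θ))
    + Real.cos θ / (2 * √(Real.sin θ)) * P.eval (Real.cos θ) with hvdef
  have ode : ∀ x, (1 - x^2) * P2.eval x - 2 * x * P1.eval x + n * (n+1) * P.eval x = 0 := by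
    intro x
    have := congrArg (eval x) hode
    simp only [derivative_mul, derivative_sub, derivative_one, derivative_X_pow, ← hP2,
      eval_add, eval_mul, eval_sub, eval_C, eval_zero, eval_pow, eval_X, eval_one] at this
    simp at this
    linarith
  have dS : ∀ θ, 0 < θ → θ ≤ Real.pi/2 →
      HasDerivAt (fun θ => √(Real.sin θ)) (Real.cos θ / (2 * √(Real.sin θ))) θ :=
    fun θ h1 h2 => (Real.hasDerivAt_sin θ).sqrt (hsin θ h1 h2).ne'
  have dPc : ∀ (Q : ℝ[X]) (θ : ℝ), HasDerivAt (fun θ => Q.eval (Real.cos θ))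
      (-Real.sin θ * (derivative Q).eval (Real.cos θ)) θ := by
    intro Q θ
    have := (Q.hasDerivAt (Real.cos θ)).comp θ (Real.hasDerivAt_cos θ)
    refine this.congr_deriv ?_
    ring
  have hu : ∀ θ, 0 < θ → θ ≤ Real.pi/2 → HasDerivAt u (v θ) θ := by
    intro θ h1 h2
    refine ((dS θ h1 h2).mul (dPc P θ)).congr_deriv ?_
    simp only [hvdef, hP1]; ring
  have hv : ∀ θ, 0 < θ → θ ≤ Real.pi/2 →
      HasDerivAt v (-(ν^2 + 1/(4 * Real.sin θ^2)) * u θ) θ := by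
    intro θ h1 h2
    have hs := hsin θ h1 h2
    have hr : 0 < √(Real.sin θ) := Real.sqrt_pos.2 hs
    have e1 := (dS θ h1 h2).mul ((Real.hasDerivAt_sin θ).neg.mul (dPc P1 θ))
    have e2 := ((Real.hasDerivAt_cos θ).div ((dS θ h1 h2).const_mul 2) (by positivity)).mul (dPc P θ)
    refine (e1.add e2).congr_deriv ?_
    have o := ode (Real.cos θ)
    have hsq : √(Real.sin θ)^2 = Real.sin θ := Real.sq_sqrt hs.le
    have hcs := Real.sin_sq_add_cos_sq θ
    simp only [hudef, ← hP1, ← hP2, hν, Pi.neg_apply, Pi.mul_apply, Pi.div_apply]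
    generalize √(Real.sin θ) = r at *
    rw [← hsq] at hcs ⊢
    generalize Real.cos θ = c at *
    generalize P.eval c = p0 at *
    generalize P1.eval c = p1 at *
    generalize P2.eval c = p2 at *
    have hc : c^2 = 1 - r^4 := by linarith [hcs, show (r^2)^2 = r^4 by ring]
    have o' : r^4 * p2 = 2 * c * p1 - n * (n+1) * p0 := by rw [hc] at o; linarith
    field_simp
    ring_nf
    have hc2 : c^2 = 1 - r^4 := hc
    have k1 : r^8 * p2 = r^4 * (2 * c * p1 - n * (n+1) * p0) := by rw [← o']; ring
    simp only [hc2]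
    ring_nf
    linear_combination 16 * k1
  set B : ℝ := √(u (Real.pi/2)^2 + v (Real.pi/2)^2 / (ν^2 + 1/4)) with hBdef
  have hB0 : 0 ≤ B := Real.sqrt_nonneg _
  have hB2 : B^2 = u (Real.pi/2)^2 + v (Real.pi/2)^2 / (ν^2 + 1/4) :=
    Real.sq_sqrt (by positivity)
  have hBpos : 0 < B := by
    rcases hB0.lt_or_eq with h | h
    · exact h
    exfalso
    apply hP
    apply Polynomial.eq_zero_of_infinite_isRoot
    apply Set.Infinite.mono (s := Set.Ico (0:ℝ) 1)
    · intro t ht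
      have hθ : 0 < Real.arccos t := Real.arccos_pos.2 ht.2
      have hθ2 : Real.arccos t ≤ Real.pi/2 := Real.arccos_le_pi_div_two.2 ht.1
      have := (gq_phase_aux ν _ hν0 hθ hθ2 u v hu hv B hB0 hB2).1
      rw [← h] at this
      have h0 : u (Real.arccos t) = 0 := abs_nonpos_iff.1 this
      simp only [hudef] at h0
      rcases mul_eq_zero.1 h0 with h1 | h1
      · exact absurd h1 (Real.sqrt_pos.2 (hsin _ hθ hθ2)).ne'
      · rwa [Real.cos_arccos (by linarith [ht.1]) ht.2.le] at h1
    · exact Set.Ico_infinite (by norm_num)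
  have hua : u a = 0 := by simp [hudef, hroot]
  have main := (gq_phase_aux ν a hν0 ha ha2 u v hu hv B hB0 hB2).2 hua
  have u0 : u (Real.pi/2) = P.eval 0 := by simp [hudef]
  have v0 : v (Real.pi/2) = -P1.eval 0 := by simp [hvdef]
  have hsa := hsin a ha ha2
  set ψ := ν * (Real.pi/2 - a) with hψ
  -- the phase is essentially frozen
  have hcot : 0 ≤ Real.cos a / Real.sin a :=
    div_nonneg (Real.cos_nonneg_of_mem_Icc ⟨by linarith, ha2⟩) hsa.le
  have two : |Real.sin (2*ψ)| ≤ (Real.cos a / Real.sin a) / (2 * ν) := by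
    rw [Real.sin_two_mul]
    have hcs : |Real.cos ψ| ≤ (Real.cos a / Real.sin a) / (4 * ν) ∨
        |Real.sin ψ| ≤ (Real.cos a / Real.sin a) / (4 * ν) := by
      rcases Nat.even_or_odd n with he | ho
      · left
        have hd := congrArg (fun q => eval 0 (derivative q)) hpar
        simp [derivative_comp, eval_comp, he.neg_one_pow, ← hP1] at hd
        have hz : P1.eval 0 = 0 := by linarith
        rw [v0, hz] at main hB2
        have hBu : B = |u (Real.pi/2)| := by
          rw [← abs_of_nonneg hB0]; apply (sq_eq_sq_iff_abs_eq_abs _ _).1; rw [hB2]; simp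
        simp only [neg_zero, zero_mul, sub_zero] at main
        rw [abs_mul, abs_mul, ← hBu, abs_of_pos hν0] at main
        rw [le_div_iff₀ (by positivity)]
        have : B * (|Real.cos ψ| * (4 * ν)) ≤ B * (Real.cos a / Real.sin a) := by linarith
        exact le_of_mul_le_mul_left this hBpos
      · right
        have hd := congrArg (fun q => eval 0 q) hpar
        simp [eval_comp, ho.neg_one_pow] at hd
        have hz : P.eval 0 = 0 := by linarith
        rw [u0, hz] at main hB2
        have hBv : B * ν ≤ |v (Real.pi/2)| := by
          apply abs_le_of_sq_le_sq' _ (abs_nonneg _) |>.2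
          rw [mul_pow, hB2, sq_abs]
          simp only [ne_eq, OfNat.ofNat_ne_zero, not_false_eq_true, zero_pow, zero_add]
          rw [div_mul_eq_mul_div, div_le_iff₀ (by positivity)]
          nlinarith [sq_nonneg (v (Real.pi/2))]
        simp only [mul_zero, zero_mul, zero_sub, abs_neg] at main
        rw [abs_mul] at main
        rw [le_div_iff₀ (by positivity)]
        have h3 : B * ν * |Real.sin ψ| ≤ |v (Real.pi/2)| * |Real.sin ψ| := by gcongr
        have : B * (|Real.sin ψ| * (4 * ν)) ≤ B * (Real.cos a / Real.sin a) := by linarith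
        exact le_of_mul_le_mul_left this hBpos
    have hh : (Real.cos a / Real.sin a) / (2 * ν) = 2 * ((Real.cos a / Real.sin a) / (4 * ν)) := by
      field_simp; norm_num
    rw [hh, abs_mul, abs_mul, abs_two]
    rcases hcs with h | h
    · calc 2 * |Real.sin ψ| * |Real.cos ψ| ≤ 2 * 1 * |Real.cos ψ| := by
            gcongr; exact Real.abs_sin_le_one _
        _ ≤ _ := by linarith
    · calc 2 * |Real.sin ψ| * |Real.cos ψ| ≤ 2 * |Real.sin ψ| * 1 := by
            gcongr; exact Real.abs_cos_le_one _
        _ ≤ _ := by linarith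
  have e : |Real.sin (2*ψ)| = |Real.cos ((2*n+1) * a)| := by
    have : 2 * ψ = (Real.pi / 2 - (2*n+1)*a) + n * Real.pi := by rw [hψ, hν]; ring
    rw [this, Real.sin_add_nat_mul_pi, Real.sin_pi_div_two_sub, abs_mul]
    simp
  rw [e] at two
  rw [abs_mul, abs_of_pos hsa]
  calc Real.sin a * |Real.cos ((2*n+1) * a)| ≤ Real.sin a * ((Real.cos a / Real.sin a) / (2 * ν)) := by gcongr
    _ = Real.cos a / (2 * ν) := by field_simp
    _ ≤ 1 / (2 * ν) := by gcongr; exact Real.cos_le_one _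
    _ = _ := by rw [hν]; congr 1; ring

lemma gq_node (n : ℕ) (P : ℝ[X]) (hP : P ≠ 0)
    (hode : derivative ((1 - X^2) * derivative P) + C ((n:ℝ) * (n+1)) * P = 0)
    (hpar : P.comp (-X) = C ((-1)^n) * P) (a : ℝ) (ha : 0 ≤ a) (ha2 : a ≤ Real.pi)
    (hroot : P.eval (Real.cos a) = 0) :
    |Real.sin a * Real.cos ((2*n+1) * a)| ≤ 1 / (2*n+1) := by
  have hpi := Real.pi_pos
  have h1n : (0:ℝ) ≤ 1 / (2*n+1) := by positivity
  rcases ha.eq_or_lt with h | h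
  · rw [← h]; simpa using h1n
  rcases ha2.eq_or_lt with h' | h'
  · rw [h']; simpa using h1n
  rcases le_total a (Real.pi/2) with h2 | h2
  · exact gq_node_half n P hP hode hpar a h h2 hroot
  · have hr : P.eval (Real.cos (Real.pi - a)) = 0 := by
      have := congrArg (eval (Real.cos a)) hpar
      simp only [eval_comp, eval_neg, eval_X, eval_mul, hroot, mul_zero] at this
      rwa [Real.cos_pi_sub]
    have := gq_node_half n P hP hode hpar (Real.pi - a) (by linarith) (by linarith) hr
    rw [Real.sin_pi_sub] at this
    have e : (2*n+1) * (Real.pi - a) = (Real.pi - (2*n+1) * a) + n * (2 * Real.pi) := by ring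
    rw [e, Real.cos_add_nat_mul_two_pi, Real.cos_pi_sub] at this
    simpa [abs_mul] using this


lemma gq_fejer (n : ℕ) (θ : ℝ) :
    4 * Real.sin θ * ∑ N ∈ Finset.range n, Real.sin ((N+1) * θ)^2
      = (2*n+1) * Real.sin θ - Real.sin ((2*n+1) * θ) := by
  induction n with
  | zero => simp
  | succ n ih =>
    rw [Finset.sum_range_succ, mul_add, ih]
    push_cast
    have e1 : (2 * (n:ℝ) + 1) * θ = 2 * ((n+1) * θ) - θ := by ring
    have e2 : (2 * ((n:ℝ) + 1) + 1) * θ = 2 * ((n+1) * θ) + θ := by ring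
    rw [e1, e2, Real.sin_sub, Real.sin_add, Real.cos_two_mul, Real.sin_sq]
    ring

lemma gq_U_small (n N : ℕ) (hN : N < n) (θ : ℝ) (h0 : 0 ≤ θ) (h1 : θ ≤ Real.pi/2)
    (hs : Real.sin θ < 1 / n) : 2 / Real.pi * (N+1) ≤ (Chebyshev.U ℝ N).eval (Real.cos θ) := by
  have hpi := Real.pi_pos
  have hn : (0:ℝ) < n := by exact_mod_cast (by omega : 0 < n)
  rcases h0.eq_or_lt with h | h
  · rw [← h, Real.cos_zero, Chebyshev.U_eval_one]
    push_cast
    have : 2 / Real.pi ≤ 1 := by rw [div_le_one hpi]; linarith [Real.pi_gt_three]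
    nlinarith [(Nat.cast_nonneg N : (0:ℝ) ≤ N)]
  · have hsp := Real.sin_pos_of_pos_of_lt_pi h (by linarith)
    have hj := Real.mul_le_sin h0 h1
    have hNn : (N:ℝ) + 1 ≤ n := by exact_mod_cast hN
    have hle : ((N:ℝ)+1) * θ ≤ Real.pi / 2 := by
      have h3 : 2 / Real.pi * θ < 1 / n := hj.trans_lt hs
      rw [lt_div_iff₀ hn, div_mul_eq_mul_div, div_mul_eq_mul_div, div_lt_one hpi] at h3
      nlinarith
    have hj2 := Real.mul_le_sin (by positivity) hle
    have hU := Chebyshev.U_real_cos θ N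
    push_cast at hU
    rw [← hU] at hj2
    have hst : Real.sin θ ≤ θ := Real.sin_le h0
    have : 2 / Real.pi * (N+1) * Real.sin θ ≤ (Chebyshev.U ℝ N).eval (Real.cos θ) * Real.sin θ := by
      refine le_trans ?_ hj2
      rw [mul_assoc]
      gcongr
    exact le_of_mul_le_mul_right this hsp

lemma gq_major (n : ℕ) (hn : 1 ≤ n) (θ c : ℝ) (h0 : 0 ≤ θ) (h1 : θ ≤ Real.pi) (hc : |c| ≤ 1)
    (hsc : |Real.sin θ * c| ≤ 1 / (2*n+1)) :
    c^2 ≤ 8 / n^3 * ∑ N ∈ Finset.range n, (Chebyshev.U ℝ N).eval (Real.cos θ)^2 := by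
  have hpi := Real.pi_pos
  have hn0 : (0:ℝ) < n := by exact_mod_cast (by omega : 0 < n)
  rcases le_or_gt (1 / (n:ℝ)) (Real.sin θ) with h | h
  · have hsp : 0 < Real.sin θ := lt_of_lt_of_le (by positivity) h
    have e : Real.sin θ^2 * ∑ N ∈ Finset.range n, (Chebyshev.U ℝ N).eval (Real.cos θ)^2
        = ∑ N ∈ Finset.range n, Real.sin ((N+1) * θ)^2 := by
      rw [Finset.mul_sum]
      refine Finset.sum_congr rfl fun N _ => ?_
      have := Chebyshev.U_real_cos θ N
      push_cast at this
      rw [← this]; ring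
    have f := gq_fejer n θ
    set S := ∑ N ∈ Finset.range n, Real.sin ((N+1) * θ)^2 with hS
    set V := ∑ N ∈ Finset.range n, (Chebyshev.U ℝ N).eval (Real.cos θ)^2
    have hSn : (n:ℝ) / 4 ≤ S := by
      have h2 : 1 ≤ n * Real.sin θ := by rwa [div_le_iff₀ hn0, mul_comm] at h
      have h3 := Real.sin_le_one ((2*n+1) * θ)
      have : Real.sin θ * (n / 4) ≤ Real.sin θ * S := by nlinarith
      exact le_of_mul_le_mul_left this hsp
    have h4 : (Real.sin θ * c)^2 ≤ (1 / (2*n+1))^2 := by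
      rw [← sq_abs]; gcongr
    have h5 : (1 / (2*(n:ℝ)+1))^2 ≤ 1 / n^2 := by
      rw [div_pow, one_pow]; gcongr; nlinarith
    have h6 : Real.sin θ^2 * c^2 ≤ Real.sin θ^2 * (8 / n^3 * V) := by
      calc Real.sin θ^2 * c^2 = (Real.sin θ * c)^2 := by ring
        _ ≤ 1 / (n:ℝ)^2 := h4.trans h5
        _ ≤ 8 / (n:ℝ)^3 * ((n:ℝ) / 4) := by
          have : 8 / (n:ℝ)^3 * (n / 4) = 2 / n^2 := by field_simp; norm_num
          rw [this]; gcongr; norm_num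
        _ ≤ 8 / n^3 * S := by gcongr
        _ = Real.sin θ^2 * (8 / n^3 * V) := by rw [← e]; ring
    exact le_of_mul_le_mul_left h6 (by positivity)
  · have key : ∀ N ∈ Finset.range n, (2 / Real.pi * (N+1))^2 ≤ (Chebyshev.U ℝ N).eval (Real.cos θ)^2 := by
      intro N hN
      rcases le_total θ (Real.pi/2) with h2 | h2
      · have := gq_U_small n N (Finset.mem_range.1 hN) θ h0 h2 h
        gcongr
      · have := gq_U_small n N (Finset.mem_range.1 hN) (Real.pi - θ) (by linarith) (by linarith)
          (by rwa [Real.sin_pi_sub])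
        rw [Real.cos_pi_sub, Chebyshev.U_eval_neg] at this
        have h3 : (2 / Real.pi * (N+1))^2 ≤ (((N:ℤ).negOnePow : ℝ) * (Chebyshev.U ℝ N).eval (Real.cos θ))^2 := by
          gcongr
        rw [mul_pow (((((N:ℤ).negOnePow : ℤˣ) : ℤ) : ℝ))] at h3
        have h4 : ((((N:ℤ).negOnePow : ℤˣ) : ℤ) : ℝ)^2 = 1 := by
          have : (((N:ℤ).negOnePow : ℤˣ) : ℤ)^2 = 1 := by
            rcases Int.units_eq_one_or (N:ℤ).negOnePow with h | h <;> rw [h] <;> simp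
          exact_mod_cast this
        rw [h4, one_mul] at h3
        exact h3
    have hsum := Finset.sum_le_sum key
    have hsq : ∀ m : ℕ, (m:ℝ)^3 / 3 ≤ ∑ N ∈ Finset.range m, ((N:ℝ)+1)^2 := by
      intro m
      induction m with
      | zero => simp
      | succ m ih =>
        rw [Finset.sum_range_succ]; push_cast
        nlinarith [(Nat.cast_nonneg m : (0:ℝ) ≤ m)]
    have hc2 : c^2 ≤ 1 := by rw [← sq_abs]; exact pow_le_one₀ (abs_nonneg _) hc
    have hpi2 : Real.pi^2 ≤ 10 := by nlinarith [Real.pi_lt_d2]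
    simp only [mul_pow] at hsum
    rw [← Finset.mul_sum] at hsum
    calc c^2 ≤ 1 := hc2
      _ ≤ 8 / n^3 * ((2 / Real.pi)^2 * (n^3/3)) := by
        have : 8 / (n:ℝ)^3 * ((2 / Real.pi)^2 * (n^3/3)) = 32 / (3 * Real.pi^2) := by
          field_simp; norm_num
        rw [this, le_div_iff₀ (by positivity)]; linarith
      _ ≤ 8 / n^3 * ((2 / Real.pi)^2 * ∑ N ∈ Finset.range n, ((N:ℝ)+1)^2) := by
        gcongr; exact hsq n
      _ ≤ _ := by gcongr

lemma gq_U_sq (N : ℕ) : (Chebyshev.U ℝ N)^2 = ∑ j ∈ Finset.range (N+1), Chebyshev.U ℝ (2 * j : ℤ) := by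
  apply Polynomial.eq_of_infinite_eval_eq
  apply Set.Infinite.mono (s := Set.Ioo (-1:ℝ) 1) _ (Set.Ioo_infinite (by norm_num))
  intro x hx
  obtain ⟨θ, hθ, rfl⟩ : ∃ θ, Real.sin θ ≠ 0 ∧ Real.cos θ = x := by
    refine ⟨Real.arccos x, ?_, Real.cos_arccos hx.1.le hx.2.le⟩
    rw [Real.sin_arccos]
    have : 0 < 1 - x^2 := by nlinarith [hx.1, hx.2]
    exact (Real.sqrt_pos.2 this).ne'
  simp only [Set.mem_ofPred_eq]
  apply mul_right_cancel₀ (pow_ne_zero 2 hθ)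
  rw [eval_pow, ← mul_pow, Chebyshev.U_real_cos, eval_finsetSum, sq (Real.sin θ), ← mul_assoc,
    Finset.sum_mul]
  simp_rw [Chebyshev.U_real_cos]
  clear hx
  induction N with
  | zero => simp; ring
  | succ N ih =>
    rw [Finset.sum_range_succ, add_mul (Finset.sum _ _), ← ih]
    push_cast
    have e1 : ((N:ℝ) + 1 + 1) * θ = ((N:ℝ)+1) * θ + θ := by ring
    have e2 : (2 * ((N:ℝ) + 1) + 1) * θ = 2 * (((N:ℝ)+1) * θ) + θ := by ring
    rw [e1, e2, Real.sin_add, Real.sin_add, Real.sin_two_mul, Real.cos_two_mul]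
    have h1 := Real.sin_sq_add_cos_sq (((N:ℝ)+1) * θ)
    have h2 := Real.sin_sq_add_cos_sq θ
    generalize Real.sin (((N:ℝ)+1) * θ) = a at *
    generalize Real.cos (((N:ℝ)+1) * θ) = b at *
    generalize Real.sin θ = p at *
    generalize Real.cos θ = q at *
    linear_combination (-p^2) * h1 + a^2 * h2

lemma gq_int_U (j : ℕ) : ∫ t in (-1:ℝ)..1, (Chebyshev.U ℝ (2 * j : ℤ)).eval t = 2 / (2*j+1) := by
  have h := gq_ftc (Chebyshev.T ℝ (2*j+1))
  rw [Chebyshev.T_derivative_eq_U, Chebyshev.T_eval_one, Chebyshev.T_eval_neg_one] at h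
  have e : (2 * (j:ℤ) + 1).negOnePow = -1 := by
    rw [Int.negOnePow_odd _ ⟨j, rfl⟩]
  rw [e] at h
  simp at h
  rw [eq_div_iff (by positivity)]
  linarith

lemma gq_int_U_sq (N n : ℕ) (h : N < n) :
    ∫ t in (-1:ℝ)..1, ((Chebyshev.U ℝ N)^2).eval t ≤ 2 * (1 + Real.log n) := by
  rw [gq_U_sq]
  simp_rw [eval_finsetSum]
  rw [intervalIntegral.integral_finsetSum
    (fun i _ => (Polynomial.continuous _).intervalIntegrable _ _)]
  simp_rw [gq_int_U]
  have h1 : (harmonic n : ℝ) ≤ 1 + Real.log n := harmonic_le_one_add_log n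
  have h2 : (harmonic n : ℝ) = ∑ i ∈ Finset.range n, (1:ℝ) / (i+1) := by
    simp [harmonic]
  calc ∑ i ∈ Finset.range (N+1), (2:ℝ) / (2*i+1)
      ≤ ∑ i ∈ Finset.range (N+1), 2 * ((1:ℝ) / (i+1)) := by
        refine Finset.sum_le_sum fun i _ => ?_
        rw [mul_one_div]; gcongr; linarith [(Nat.cast_nonneg i : (0:ℝ) ≤ i)]
    _ ≤ ∑ i ∈ Finset.range n, 2 * ((1:ℝ) / (i+1)) := by
        apply Finset.sum_le_sum_of_subset_of_nonneg
        · exact Finset.range_mono h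
        · intro i _ _; positivity
    _ = 2 * harmonic n := by rw [h2, Finset.mul_sum]
    _ ≤ _ := by linarith

lemma gq_sum_w (n : ℕ) (x w : Fin n → ℝ)
    (hex : ∀ p : ℝ[X], p.natDegree ≤ 2 * n - 1 →
        ∑ k : Fin n, w k * p.eval (x k) = ∫ t in (-1:ℝ)..1, p.eval t) : ∑ k, w k = 2 := by
  have := hex 1 (by simp)
  simp at this
  rw [this]; norm_num

lemma gq_delta (n : ℕ) (hn : 1 ≤ n) (x w : Fin n → ℝ) (hx : ∀ k, x k ∈ Set.Icc (-1:ℝ) 1)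
    (hw : ∀ k, 0 < w k)
    (hex : ∀ p : ℝ[X], p.natDegree ≤ 2 * n - 1 →
        ∑ k : Fin n, w k * p.eval (x k) = ∫ t in (-1:ℝ)..1, p.eval t) :
    (∑ k, w k * |Real.cos ((2*n+1) * Real.arccos (x k))|)^2 ≤ 32 * (1 + Real.log n) / n^2 := by
  have hn0 : (0:ℝ) < n := by exact_mod_cast (by omega : 0 < n)
  set P : ℝ[X] := ∏ k, (X - C (x k)) with hPdef
  have hm : P.Monic := monic_prod_of_monic _ _ fun k _ => monic_X_sub_C _
  have hd : P.natDegree = n := by simp [hPdef]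
  have hr : ∀ k, P.eval (x k) = 0 := by
    intro k
    rw [hPdef, eval_prod]
    exact Finset.prod_eq_zero (Finset.mem_univ k) (by simp)
  have ho : ∀ q : ℝ[X], q.degree < n → ∫ t in (-1:ℝ)..1, (P * q).eval t = 0 := by
    intro q hq
    have hqn : q.natDegree < n := by
      by_cases h0 : q = 0
      · subst h0; simp; omega
      · exact (natDegree_lt_iff_degree_lt h0).2 hq
    rw [← hex _ (by refine natDegree_mul_le.trans ?_; omega)]
    simp [hr]
  have hode := gq_ode n P hd ho
  have hpar := gq_parity n P hd ho
  have hk : ∀ k, Real.cos ((2*n+1) * Real.arccos (x k))^2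
      ≤ 8 / n^3 * ∑ N ∈ Finset.range n, (Chebyshev.U ℝ N).eval (x k)^2 := by
    intro k
    have hcx : Real.cos (Real.arccos (x k)) = x k := Real.cos_arccos (hx k).1 (hx k).2
    have := gq_major n hn (Real.arccos (x k)) _ (Real.arccos_nonneg _) (Real.arccos_le_pi _)
      (Real.abs_cos_le_one _) (gq_node n P hm.ne_zero hode hpar _ (Real.arccos_nonneg _)
        (Real.arccos_le_pi _) (by rw [hcx]; exact hr k))
    rwa [hcx] at this
  have h2 : ∑ k, w k * Real.cos ((2*n+1) * Real.arccos (x k))^2 ≤ 16 * (1 + Real.log n) / n^2 := by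
    calc _ ≤ ∑ k, w k * (8 / n^3 * ∑ N ∈ Finset.range n, (Chebyshev.U ℝ N).eval (x k)^2) := by
          refine Finset.sum_le_sum fun k _ => ?_
          exact mul_le_mul_of_nonneg_left (hk k) (hw k).le
      _ = 8 / n^3 * ∑ N ∈ Finset.range n, ∑ k, w k * ((Chebyshev.U ℝ N)^2).eval (x k) := by
          rw [Finset.sum_comm, Finset.mul_sum]
          refine Finset.sum_congr rfl fun k _ => ?_
          simp only [eval_pow]
          rw [← Finset.mul_sum]; ring
      _ ≤ 8 / n^3 * ∑ N ∈ Finset.range n, 2 * (1 + Real.log n) := by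
          gcongr with N hN
          have hN' := Finset.mem_range.1 hN
          rw [hex]
          · exact gq_int_U_sq N n hN'
          · rw [natDegree_pow, Chebyshev.natDegree_U_natCast]; omega
      _ = 16 * (1 + Real.log n) / n^2 := by
          simp; field_simp; norm_num
  have cs := Finset.sum_sq_le_sum_mul_sum_of_sq_le_mul Finset.univ (r := fun k => w k * |Real.cos ((2*n+1) * Real.arccos (x k))|)
    (f := w) (g := fun k => w k * Real.cos ((2*n+1) * Real.arccos (x k))^2)
    (fun k _ => (hw k).le) (fun k _ => by have := (hw k).le; positivity)
    (fun k _ => le_of_eq (by rw [mul_pow, sq_abs]; ring))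
  rw [gq_sum_w n x w hex] at cs
  calc _ ≤ _ := cs
    _ ≤ 2 * (16 * (1 + Real.log n) / n^2) := by gcongr
    _ = _ := by ring


lemma gq_int_T (N : ℕ) : |∫ t in (-1:ℝ)..1, (Chebyshev.T ℝ N).eval t| ≤ 4 / ((N:ℝ)^2 + 1) := by
  rcases N with _ | _ | N
  · simp; norm_num
  · simp; norm_num
  · set a : ℝ := (N:ℝ) with ha
    have ha0 : 0 ≤ a := Nat.cast_nonneg N
    have hh := gq_ftc (C (1/(2*(a+3))) * Chebyshev.T ℝ (N+3:ℤ) - C (1/(2*(a+1))) * Chebyshev.T ℝ (N+1:ℤ))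
    have e : derivative (C (1/(2*(a+3))) * Chebyshev.T ℝ (N+3:ℤ) - C (1/(2*(a+1))) * Chebyshev.T ℝ (N+1:ℤ))
        = Chebyshev.T ℝ ((N + 1 + 1 : ℕ) : ℤ) := by
      rw [derivative_sub, derivative_C_mul, derivative_C_mul, Chebyshev.T_derivative_eq_U,
        Chebyshev.T_derivative_eq_U]
      have h3 : (((N:ℤ) + 3 : ℤ) : ℝ[X]) = C (a+3) := by simp [ha]; rfl
      have h1 : (((N:ℤ) + 1 : ℤ) : ℝ[X]) = C (a+1) := by simp [ha]
      rw [h3, h1, ← mul_assoc, ← mul_assoc, ← C_mul, ← C_mul]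
      have c3 : 1 / (2*(a+3)) * (a+3) = 1/2 := by field_simp
      have c1 : 1 / (2*(a+1)) * (a+1) = 1/2 := by field_simp
      rw [c3, c1]
      have hT := Chebyshev.two_mul_T_eq_U_sub_U (R := ℝ) (N:ℤ)
      have i1 : (N:ℤ) + 3 - 1 = N + 2 := by ring
      have i2 : (N:ℤ) + 1 - 1 = N := by ring
      have i3 : ((N + 1 + 1 : ℕ) : ℤ) = N + 2 := by push_cast; ring
      rw [i1, i2, i3, ← mul_sub, ← hT, ← mul_assoc]
      have : (C (1/2) * 2 : ℝ[X]) = 1 := by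
        rw [show (2:ℝ[X]) = C 2 from rfl, ← C_mul]; simp
      rw [this, one_mul]
    rw [e] at hh
    rw [hh]
    simp only [eval_sub, eval_mul, eval_C, Chebyshev.T_eval_one, Chebyshev.T_eval_neg_one]
    have hs : ((N:ℤ)+3).negOnePow = ((N:ℤ)+1).negOnePow := by
      rw [show (N:ℤ)+3 = (N+1) + 2 by ring, Int.negOnePow_add, Int.negOnePow_even 2 (by decide), mul_one]
    rw [hs]
    push_cast
    have hu : |(1:ℝ) - ((((N:ℤ)+1).negOnePow : ℤ) : ℝ)| ≤ 2 := by
      rcases Int.units_eq_one_or ((N:ℤ)+1).negOnePow with h | h <;> rw [h] <;> norm_num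
    have e2 : (1/(2*(a+3)) * 1 - 1/(2*(a+1)) * 1 - (1/(2*(a+3)) * ((((N:ℤ)+1).negOnePow : ℤ) : ℝ) - 1/(2*(a+1)) * ((((N:ℤ)+1).negOnePow : ℤ) : ℝ)))
      = -((1 - ((((N:ℤ)+1).negOnePow : ℤ) : ℝ)) * (1 / ((a+1)*(a+3)))) := by
      field_simp; ring
    rw [e2, abs_neg, abs_mul, abs_of_pos (show (0:ℝ) < 1 / ((a+1)*(a+3)) by positivity)]
    calc _ ≤ 2 * (1 / ((a+1)*(a+3))) := by gcongr
      _ = 2 / ((a+1)*(a+3)) := by ring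
      _ ≤ _ := by
        rw [div_le_div_iff₀ (by positivity) (by positivity)]
        nlinarith

lemma gq_alias (n j : ℕ) (r θ : ℝ) :
    |Real.cos ((r + j * (4*n+2)) * θ) - (-1)^j * Real.cos (r * θ)| ≤ 2 * j * |Real.cos ((2*n+1) * θ)| := by
  induction j with
  | zero => simp
  | succ j ih =>
    push_cast
    have e : Real.cos ((r + (j+1) * (4*n+2)) * θ) + Real.cos ((r + j * (4*n+2)) * θ)
        = 2 * Real.cos ((r + j * (4*n+2)) * θ + (2*n+1)*θ) * Real.cos ((2*n+1)*θ) := by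
      rw [Real.cos_add_cos]; congr 2 <;> [congr 2; skip] <;> ring_nf
    have h2 : |Real.cos ((r + (j+1) * (4*n+2)) * θ) + Real.cos ((r + j * (4*n+2)) * θ)|
        ≤ 2 * |Real.cos ((2*n+1)*θ)| := by
      rw [e, abs_mul, abs_mul, abs_two]
      have := Real.abs_cos_le_one ((r + j * (4*n+2)) * θ + (2*n+1)*θ)
      have := abs_nonneg (Real.cos ((2*n+1)*θ))
      nlinarith
    have h3 : Real.cos ((r + (j+1) * (4*n+2)) * θ) - (-1)^(j+1) * Real.cos (r * θ)
      = (Real.cos ((r + (j+1) * (4*n+2)) * θ) + Real.cos ((r + j * (4*n+2)) * θ))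
        - (Real.cos ((r + j * (4*n+2)) * θ) - (-1)^j * Real.cos (r * θ)) := by ring
    rw [h3]
    refine (abs_sub _ _).trans ?_
    linarith

lemma gq_summable_sq : Summable (fun r : ℤ => 4 / ((r:ℝ)^2 + 1)) := by
  have h1 : Summable (fun r : ℤ => 1 / (r:ℝ)^2) := Real.summable_one_div_int_pow.2 (by norm_num)
  have h2 : Summable (fun r : ℤ => if r = 0 then (4:ℝ) else 0) := (hasSum_ite_eq 0 4).summable
  refine Summable.of_nonneg_of_le (fun r => by positivity) (fun r => ?_) (h2.add (h1.mul_left 4))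
  by_cases hr : r = 0
  · simp [hr]
  · have : (r:ℝ) ≠ 0 := by exact_mod_cast hr
    have : 0 < (r:ℝ)^2 := by positivity
    simp only [hr, if_false, zero_add, mul_one_div]
    gcongr
    linarith

/-- error bound for Chebyshev polynomials beyond the degree of exactness -/
lemma gq_errT (n : ℕ) (hn : 1 ≤ n) (x w : Fin n → ℝ) (hx : ∀ k, x k ∈ Set.Icc (-1:ℝ) 1)
    (hw : ∀ k, 0 < w k)
    (hex : ∀ p : ℝ[X], p.natDegree ≤ 2 * n - 1 →
        ∑ k : Fin n, w k * p.eval (x k) = ∫ t in (-1:ℝ)..1, p.eval t)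
    (δ : ℝ) (hδ : δ = ∑ k, w k * |Real.cos ((2*n+1) * Real.arccos (x k))|)
    (t : ℝ) (ht0 : 0 ≤ t) (ht1 : t ≤ 1) :
    (∀ N : ℕ, |(∫ t in (-1:ℝ)..1, (Chebyshev.T ℝ N).eval t) - ∑ k, w k * (Chebyshev.T ℝ N).eval (x k)| ≤ 4)
    ∧ ∀ (N j : ℕ) (r : ℤ), 1 ≤ j → |r| ≤ 2*n+1 → (N:ℤ) = r + j * (4*n+2) →
    |(∫ t in (-1:ℝ)..1, (Chebyshev.T ℝ N).eval t) - ∑ k, w k * (Chebyshev.T ℝ N).eval (x k)|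
      ≤ 2 * (4 / ((r:ℝ)^2+1)) + 4 / (((r - 2*n : ℤ) : ℝ)^2+1) + 4 / (((r + 2*n : ℤ) : ℝ)^2+1)
        + 4 * (j * δ)^t := by
  have hsw := gq_sum_w n x w hex
  have hTx : ∀ (N : ℤ) k, (Chebyshev.T ℝ N).eval (x k) = Real.cos (N * Real.arccos (x k)) := by
    intro N k
    rw [← Chebyshev.T_real_cos, Real.cos_arccos (hx k).1 (hx k).2]
  have hq2 : ∀ N : ℤ, |∑ k, w k * (Chebyshev.T ℝ N).eval (x k)| ≤ 2 := by
    intro N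
    refine (Finset.abs_sum_le_sum_abs _ _).trans ?_
    rw [← hsw]
    refine Finset.sum_le_sum fun k _ => ?_
    rw [hTx, abs_mul, abs_of_pos (hw k)]
    have := Real.abs_cos_le_one (N * Real.arccos (x k))
    nlinarith [hw k]
  have hI2 : ∀ N : ℕ, |∫ t in (-1:ℝ)..1, (Chebyshev.T ℝ N).eval t| ≤ 2 := by
    intro N
    have := intervalIntegral.norm_integral_le_of_norm_le_const (a := (-1:ℝ)) (b := 1) (C := 1)
      (f := fun t => (Chebyshev.T ℝ N).eval t) (fun y hy => by
        rw [Set.uIoc_of_le (by norm_num)] at hy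
        rw [Real.norm_eq_abs, ← Real.cos_arccos hy.1.le hy.2, Chebyshev.T_real_cos]
        exact Real.abs_cos_le_one _)
    rw [Real.norm_eq_abs] at this
    norm_num at this
    exact this
  have h4 : ∀ N : ℕ, |(∫ t in (-1:ℝ)..1, (Chebyshev.T ℝ N).eval t) - ∑ k, w k * (Chebyshev.T ℝ N).eval (x k)| ≤ 4 := by
    intro N
    refine (abs_sub _ _).trans ?_
    linarith [hq2 N, hI2 N]
  refine ⟨h4, ?_⟩
  intro N j r hj hr hN
  have hδ0 : 0 ≤ δ := by
    rw [hδ]; exact Finset.sum_nonneg fun k _ => mul_nonneg (hw k).le (abs_nonneg _)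
  have hj1 : (1:ℝ) ≤ j := by exact_mod_cast hj
  have p1 : (0:ℝ) ≤ 4 / ((r:ℝ)^2+1) := by positivity
  have p2 : (0:ℝ) ≤ 4 / (((r - 2*n : ℤ) : ℝ)^2+1) := by positivity
  have p3 : (0:ℝ) ≤ 4 / (((r + 2*n : ℤ) : ℝ)^2+1) := by positivity
  rcases le_or_gt 1 (j * δ) with h1 | h1
  · have : 1 ≤ (j * δ)^t := Real.one_le_rpow h1 ht0
    linarith [h4 N]
  have hjt : j * δ ≤ (j * δ)^t := by
    have hnn : 0 ≤ j * δ := by positivity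
    rcases hnn.eq_or_lt with h | h
    · rw [← h]; exact Real.rpow_nonneg le_rfl _
    · calc j * δ = (j*δ)^(1:ℝ) := (Real.rpow_one _).symm
        _ ≤ _ := Real.rpow_le_rpow_of_exponent_ge h h1.le ht1
  -- integral part
  have hI : |∫ t in (-1:ℝ)..1, (Chebyshev.T ℝ N).eval t| ≤ 4 / ((r:ℝ)^2+1) := by
    refine (gq_int_T N).trans ?_
    have hrN : |r| ≤ (N:ℤ) := by
      rw [hN]
      have h5 : (4*n+2 : ℤ) ≤ j * (4*n+2) := by
        have : (1:ℤ) ≤ j := by exact_mod_cast hj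
        nlinarith
      rw [abs_le] at hr ⊢
      constructor <;> linarith
    have : (r:ℝ)^2 ≤ (N:ℝ)^2 := by
      have h6 : r^2 ≤ (N:ℤ)^2 := by rw [← sq_abs]; gcongr
      exact_mod_cast h6
    gcongr
  -- node part
  have hqr : |∑ k, w k * (Chebyshev.T ℝ r).eval (x k)|
      ≤ 4 / ((r:ℝ)^2+1) + 4 / (((r - 2*n : ℤ) : ℝ)^2+1) + 4 / (((r + 2*n : ℤ) : ℝ)^2+1) := by
    rcases le_or_gt (|r|) (2*n-1) with h | h
    · have hT : Chebyshev.T ℝ r = Chebyshev.T ℝ ((r.natAbs : ℕ) : ℤ) := by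
        rw [Chebyshev.T_natAbs]
      rw [hT, hex _ (by rw [Chebyshev.natDegree_T]; rw [abs_le] at h; omega)]
      have := gq_int_T r.natAbs
      have e : ((r.natAbs : ℕ) : ℝ)^2 = (r:ℝ)^2 := by
        rw [Nat.cast_natAbs]; push_cast; rw [sq_abs]
      rw [e] at this
      linarith
    · have big : ∀ z : ℤ, |z| ≤ 1 → (2:ℝ) ≤ 4 / ((z:ℝ)^2+1) := by
        intro z hz
        have : z^2 ≤ 1 := by rw [← sq_abs]; nlinarith [abs_nonneg z]
        have : (z:ℝ)^2 ≤ 1 := by exact_mod_cast this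
        rw [le_div_iff₀ (by positivity)]; linarith
      rcases le_total 0 r with h0 | h0
      · have := big (r - 2*n) (by rw [abs_of_nonneg h0] at h hr; rw [abs_le]; constructor <;> linarith)
        linarith [hq2 r]
      · have := big (r + 2*n) (by rw [abs_of_nonpos h0] at h hr; rw [abs_le]; constructor <;> linarith)
        linarith [hq2 r]
  have hqN : |∑ k, w k * (Chebyshev.T ℝ N).eval (x k) - (-1)^j * ∑ k, w k * (Chebyshev.T ℝ r).eval (x k)|
      ≤ 2 * (j * δ) := by
    rw [Finset.mul_sum, ← Finset.sum_sub_distrib]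
    refine (Finset.abs_sum_le_sum_abs _ _).trans ?_
    rw [hδ, Finset.mul_sum, Finset.mul_sum]
    refine Finset.sum_le_sum fun k _ => ?_
    have ha := gq_alias n j r (Real.arccos (x k))
    have hNr : ((N:ℤ):ℝ) = r + j * (4*n+2) := by rw [hN]; push_cast; ring
    rw [hTx, hTx, hNr]
    have e : w k * Real.cos ((r + j * (4*n+2)) * Real.arccos (x k)) - (-1)^j * (w k * Real.cos (r * Real.arccos (x k)))
      = w k * (Real.cos ((r + j * (4*n+2)) * Real.arccos (x k)) - (-1)^j * Real.cos (r * Real.arccos (x k))) := by ring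
    rw [e, abs_mul, abs_of_pos (hw k)]
    calc _ ≤ w k * (2 * j * |Real.cos ((2*n+1) * Real.arccos (x k))|) :=
          mul_le_mul_of_nonneg_left ha (hw k).le
      _ = _ := by ring
  have hqN2 : |∑ k, w k * (Chebyshev.T ℝ N).eval (x k)| ≤ 2 * (j * δ) + |∑ k, w k * (Chebyshev.T ℝ r).eval (x k)| := by
    have h7 := abs_sub_abs_le_abs_sub (∑ k, w k * (Chebyshev.T ℝ N).eval (x k)) ((-1)^j * ∑ k, w k * (Chebyshev.T ℝ r).eval (x k))
    rw [abs_mul, abs_pow, abs_neg, abs_one, one_pow, one_mul] at h7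
    linarith
  refine (abs_sub _ _).trans ?_
  have hnn : 0 ≤ j * δ := by positivity
  linarith


lemma gq_fourier (f : ℝ → ℝ) (hf : ContinuousOn f (Set.Icc (-1) 1))
    (hsum : Summable (fun m : ℕ => chebCoeff f m)) (θ : ℝ) :
    HasSum (fun m : ℕ => chebCoeff f m * Real.cos (m * θ)) (f (Real.cos θ) + chebCoeff f 0 / 2) := by
  have hpi := Real.pi_pos
  have : Fact (0 < 2 * Real.pi) := ⟨by positivity⟩
  have hc : Continuous (fun θ => f (Real.cos θ)) :=
    hf.comp_continuous Real.continuous_cos (fun θ => Real.cos_mem_Icc θ)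
  have hcC : Continuous (fun θ => ((f (Real.cos θ) : ℝ) : ℂ)) := Complex.continuous_ofReal.comp hc
  have hper : Function.Periodic (fun θ => ((f (Real.cos θ) : ℝ) : ℂ)) (2 * Real.pi) := by
    intro θ; simp
  let G : C(AddCircle (2 * Real.pi), ℂ) :=
    ⟨hper.lift, by exact hcC.quotient_liftOn' _⟩
  have hG : ∀ y : ℝ, G (y : AddCircle (2 * Real.pi)) = ((f (Real.cos y) : ℝ) : ℂ) := fun y => rfl
  have hcoef : ∀ n : ℤ, fourierCoeff G n = ((chebCoeff f n.natAbs / 2 : ℝ) : ℂ) := by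
    intro n
    rw [fourierCoeff_eq_intervalIntegral G n (-Real.pi)]
    have e0 : -Real.pi + 2 * Real.pi = Real.pi := by ring
    rw [e0]
    have e1 : ∀ y : ℝ, (fourier (-n) (y : AddCircle (2 * Real.pi)) : ℂ) • G (y : AddCircle (2 * Real.pi))
        = Complex.exp (-(n * y * Complex.I)) * ((f (Real.cos y) : ℝ) : ℂ) := by
      intro y
      rw [hG, fourier_coe_apply, smul_eq_mul]
      congr 2
      push_cast
      have : (Real.pi : ℂ) ≠ 0 := by exact_mod_cast hpi.ne'
      field_simp
    simp_rw [e1]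
    have hcont : Continuous (fun y : ℝ => Complex.exp (-(n * y * Complex.I)) * ((f (Real.cos y) : ℝ) : ℂ)) := by
      fun_prop
    rw [← intervalIntegral.integral_add_adjacent_intervals (b := 0)
      (hcont.intervalIntegrable _ _) (hcont.intervalIntegrable _ _)]
    have e2 := intervalIntegral.integral_comp_neg (a := 0) (b := Real.pi)
      (fun y : ℝ => Complex.exp (-(n * y * Complex.I)) * ((f (Real.cos y) : ℝ) : ℂ))
    rw [neg_zero] at e2
    rw [← e2, ← intervalIntegral.integral_add]
    · have e3 : ∀ y : ℝ, Complex.exp (-(n * ((-y : ℝ) : ℂ) * Complex.I)) * ((f (Real.cos (-y)) : ℝ) : ℂ)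
          + Complex.exp (-(n * y * Complex.I)) * ((f (Real.cos y) : ℝ) : ℂ)
          = ((2 * (f (Real.cos y) * Real.cos (n.natAbs * y)) : ℝ) : ℂ) := by
        intro y
        have h1 : Real.cos (n.natAbs * y) = Real.cos (n * y) := by
          rw [Nat.cast_natAbs]
          rcases abs_choice n with h | h
          · rw [h]
          · rw [h]; push_cast; rw [neg_mul, Real.cos_neg]
        rw [h1, Real.cos_neg]
        push_cast
        rw [Complex.cos]
        ring_nf
      simp_rw [e3]
      rw [intervalIntegral.integral_ofReal, chebCoeff, intervalIntegral.integral_const_mul,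
        Complex.real_smul, ← Complex.ofReal_mul]
      congr 1
      field_simp
    · exact (hcont.comp continuous_neg).intervalIntegrable _ _
    · exact hcont.intervalIntegrable _ _
  have hs : Summable (fourierCoeff G) := by
    have : (fourierCoeff G) = fun n : ℤ => ((chebCoeff f n.natAbs / 2 : ℝ) : ℂ) := funext hcoef
    rw [this]
    apply Complex.summable_ofReal.2
    apply Summable.of_nat_of_neg
    · simpa using hsum.div_const 2
    · simpa using hsum.div_const 2
  have h1 := has_pointwise_sum_fourier_series_of_summable hs (θ : AddCircle (2 * Real.pi))
  have h2 := h1.nat_add_neg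
  rw [hG] at h2
  have h3 : ∀ m : ℕ, fourierCoeff G (m:ℤ) • (fourier (m:ℤ) (θ : AddCircle (2 * Real.pi)) : ℂ)
      + fourierCoeff G (-(m:ℤ)) • (fourier (-(m:ℤ)) (θ : AddCircle (2 * Real.pi)) : ℂ)
      = ((chebCoeff f m * Real.cos (m * θ) : ℝ) : ℂ) := by
    intro m
    rw [hcoef, hcoef, fourier_coe_apply, fourier_coe_apply]
    simp only [Int.natAbs_neg, Int.natAbs_natCast, smul_eq_mul]
    push_cast
    rw [Complex.cos]
    have : (Real.pi : ℂ) ≠ 0 := by exact_mod_cast hpi.ne'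
    have i1 : 2 * (Real.pi:ℂ) * Complex.I * m * θ / (2 * Real.pi) = m * θ * Complex.I := by
      field_simp
    have i2 : 2 * (Real.pi:ℂ) * Complex.I * (-m) * θ / (2 * Real.pi) = -(m * θ) * Complex.I := by
      field_simp
    rw [i1, i2]
    ring
  simp_rw [h3] at h2
  rw [hcoef 0] at h2
  have h4 : (((f (Real.cos θ) : ℝ) : ℂ) + ((chebCoeff f (Int.natAbs 0) / 2 : ℝ) : ℂ) • (fourier 0 (θ : AddCircle (2 * Real.pi)) : ℂ))
     = ((f (Real.cos θ) + chebCoeff f 0 / 2 : ℝ) : ℂ) := by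
    simp
  rw [h4] at h2
  exact Complex.hasSum_ofReal.1 h2

/-- the error functional applied termwise -/
lemma gq_err_hasSum (f : ℝ → ℝ) (hf : ContinuousOn f (Set.Icc (-1) 1))
    (hsum : Summable (fun m : ℕ => |chebCoeff f m|)) (n : ℕ) (x w : Fin n → ℝ)
    (hx : ∀ k, x k ∈ Set.Icc (-1:ℝ) 1) (hw2 : ∑ k, w k = 2) :
    HasSum (fun m : ℕ => chebCoeff f m * ((∫ t in (-1:ℝ)..1, (Chebyshev.T ℝ m).eval t)
      - ∑ k, w k * (Chebyshev.T ℝ m).eval (x k)))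
      ((∫ t in (-1:ℝ)..1, f t) - ∑ k : Fin n, w k * f (x k)) := by
  have hT : ∀ y ∈ Set.Icc (-1:ℝ) 1, HasSum (fun m : ℕ => chebCoeff f m * (Chebyshev.T ℝ m).eval y)
      (f y + chebCoeff f 0 / 2) := by
    intro y hy
    have := gq_fourier f hf hsum.of_abs (Real.arccos y)
    rw [Real.cos_arccos hy.1 hy.2] at this
    refine this.congr_fun ?_ |> fun h => h
    intro m
    have h := Chebyshev.T_real_cos (Real.arccos y) m
    rw [Real.cos_arccos hy.1 hy.2] at h
    rw [h]; simp
  have hintg : HasSum (fun m : ℕ => ∫ t in (-1:ℝ)..1, chebCoeff f m * (Chebyshev.T ℝ m).eval t)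
      (∫ t in (-1:ℝ)..1, (f t + chebCoeff f 0 / 2)) := by
    apply intervalIntegral.hasSum_integral_of_dominated_convergence (fun m _ => |chebCoeff f m|)
    · intro m
      exact Continuous.aestronglyMeasurable (by fun_prop)
    · intro m
      filter_upwards with y hy
      rw [Set.uIoc_of_le (by norm_num)] at hy
      rw [norm_mul, Real.norm_eq_abs, Real.norm_eq_abs, ← Real.cos_arccos hy.1.le hy.2, Chebyshev.T_real_cos]
      exact mul_le_of_le_one_right (abs_nonneg _) (Real.abs_cos_le_one _)
    · filter_upwards with y _ using hsum
    · simp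
    · filter_upwards with y hy
      rw [Set.uIoc_of_le (by norm_num)] at hy
      exact hT y ⟨hy.1.le, hy.2⟩
  have hnode : HasSum (fun m : ℕ => ∑ k, w k * (chebCoeff f m * (Chebyshev.T ℝ m).eval (x k)))
      (∑ k, w k * (f (x k) + chebCoeff f 0 / 2)) :=
    hasSum_sum fun k _ => (hT (x k) (hx k)).mul_left (w k)
  have hfin := hintg.sub hnode
  have e1 : (fun m : ℕ => chebCoeff f m * ((∫ t in (-1:ℝ)..1, (Chebyshev.T ℝ m).eval t)
      - ∑ k, w k * (Chebyshev.T ℝ m).eval (x k)))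
      = fun m : ℕ => (∫ t in (-1:ℝ)..1, chebCoeff f m * (Chebyshev.T ℝ m).eval t)
        - ∑ k, w k * (chebCoeff f m * (Chebyshev.T ℝ m).eval (x k)) := by
    funext m
    rw [intervalIntegral.integral_const_mul, mul_sub, Finset.mul_sum]
    congr 1
    exact Finset.sum_congr rfl fun k _ => by ring
  have e2 : (∫ t in (-1:ℝ)..1, f t) - ∑ k : Fin n, w k * f (x k)
      = (∫ t in (-1:ℝ)..1, (f t + chebCoeff f 0 / 2))
        - ∑ k, w k * (f (x k) + chebCoeff f 0 / 2) := by
    rw [intervalIntegral.integral_add]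
    · simp only [mul_add, Finset.sum_add_distrib, ← Finset.sum_mul, hw2]
      simp; ring
    · apply ContinuousOn.intervalIntegrable
      rwa [Set.uIcc_of_le (by norm_num)]
    · simp
  rw [e1, e2]
  exact hfin

lemma gq_blocks (g : ℕ → ℝ) (hg : ∀ m, 0 ≤ g m) (P K : ℕ) (hK : 0 < K) (B : ℕ → ℝ)
    (hBn : ∀ q, 0 ≤ B q) (hBs : Summable B)
    (hB : ∀ q, ∑ i ∈ Finset.range K, g (P + q * K + i) ≤ B q) (N : ℕ) :
    ∑ m ∈ Finset.range N, g m ≤ ∑ m ∈ Finset.range P, g m + ∑' q, B q := by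
  have h1 : ∀ J : ℕ, ∑ m ∈ Finset.range (P + J * K), g m
      ≤ ∑ m ∈ Finset.range P, g m + ∑ q ∈ Finset.range J, B q := by
    intro J
    induction J with
    | zero => simp
    | succ J ih =>
      have e : P + (J + 1) * K = (P + J * K) + K := by ring
      rw [e, Finset.sum_range_add, Finset.sum_range_succ _ J]
      have := hB J
      linarith
  have h2 : N ≤ P + N * K := by nlinarith
  calc ∑ m ∈ Finset.range N, g m ≤ ∑ m ∈ Finset.range (P + N * K), g m :=
        Finset.sum_le_sum_of_subset_of_nonneg (Finset.range_subset_range.2 h2) (fun m _ _ => hg m)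
    _ ≤ _ := h1 N
    _ ≤ _ := by
        have := hBs.sum_le_tsum (Finset.range N) (fun q _ => hBn q)
        linarith

lemma gq_shift_sum (K : ℕ) (c : ℤ) :
    ∑ i ∈ Finset.range K, 4 / ((((i:ℤ) + c : ℤ) : ℝ)^2 + 1)
      ≤ ∑' r : ℤ, 4 / ((r:ℝ)^2 + 1) := by
  have hinj : Function.Injective (fun i : ℕ => (i:ℤ) + c) := by
    intro a b h
    simp only at h
    omega
  have h := gq_summable_sq.sum_le_tsum ((Finset.range K).image (fun i : ℕ => (i:ℤ) + c))
    (fun r _ => by positivity)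
  rw [Finset.sum_image (fun a _ b _ hab => hinj hab)] at h
  exact h

lemma gq_block (s : ℝ) (hs : 0 < s) (A : ℝ) (hA : 0 ≤ A) (a e : ℕ → ℝ)
    (ha : ∀ m : ℕ, 1 ≤ m → |a m| ≤ A * (m:ℝ) ^ (-s - 1)) (n : ℕ) (hn : 1 ≤ n)
    (D : ℝ) (t : ℝ)
    (he : ∀ (N j : ℕ) (r : ℤ), 1 ≤ j → |r| ≤ 2*n+1 → (N:ℤ) = r + j*(4*n+2) →
      |e N| ≤ 2*(4/((r:ℝ)^2+1)) + 4/(((r-2*n:ℤ):ℝ)^2+1) + 4/(((r+2*n:ℤ):ℝ)^2+1) + 4*(j*D)^t)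
    (q : ℕ) :
    ∑ i ∈ Finset.range (4*n+2), |a (2*n+1 + q*(4*n+2) + i) * e (2*n+1 + q*(4*n+2) + i)|
      ≤ A * (((q+1:ℕ):ℝ) * n) ^ (-s-1) *
        (4 * (∑' r : ℤ, 4 / ((r:ℝ)^2 + 1)) + (4*n+2) * (4*(((q+1:ℕ):ℝ)*D)^t)) := by
  have hterm : ∀ i ∈ Finset.range (4*n+2),
      |a (2*n+1 + q*(4*n+2) + i) * e (2*n+1 + q*(4*n+2) + i)|
      ≤ A * (((q+1:ℕ):ℝ) * n) ^ (-s-1) *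
        (2*(4/((((i:ℤ) + (-(2*n+1)) : ℤ):ℝ)^2+1)) + 4/((((i:ℤ) + (-(4*n+1)):ℤ):ℝ)^2+1)
          + 4/((((i:ℤ) + (-1):ℤ):ℝ)^2+1) + 4*(((q+1:ℕ):ℝ)*D)^t) := by
    intro i hi
    rw [Finset.mem_range] at hi
    rw [abs_mul]
    have h1 := he (2*n+1 + q*(4*n+2) + i) (q+1) ((i:ℤ) + (-(2*n+1))) (by omega)
      (by rw [abs_le]; constructor <;> omega) (by push_cast; ring)
    have e1 : (i:ℤ) + (-(2*n+1)) - 2*n = (i:ℤ) + (-(4*n+1)) := by ring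
    have e2 : (i:ℤ) + (-(2*n+1)) + 2*n = (i:ℤ) + (-1) := by ring
    rw [e1, e2] at h1
    have h2 := ha (2*n+1 + q*(4*n+2) + i) (by omega)
    have hpos : (0:ℝ) < ((q+1:ℕ):ℝ) * n := by
      have : (0:ℝ) < n := by exact_mod_cast hn
      positivity
    have h3 : (((2*n+1 + q*(4*n+2) + i : ℕ)):ℝ) ^ (-s-1) ≤ (((q+1:ℕ):ℝ) * n) ^ (-s-1) := by
      apply Real.rpow_le_rpow_of_nonpos hpos _ (by linarith)
      have : (q+1) * n ≤ 2*n+1 + q*(4*n+2) + i := by nlinarith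
      exact_mod_cast this
    exact mul_le_mul (h2.trans (mul_le_mul_of_nonneg_left h3 hA)) h1 (abs_nonneg _) (by positivity)
  refine (Finset.sum_le_sum hterm).trans ?_
  rw [← Finset.mul_sum]
  apply mul_le_mul_of_nonneg_left _ (by positivity)
  rw [Finset.sum_add_distrib, Finset.sum_add_distrib, Finset.sum_add_distrib, ← Finset.mul_sum]
  have s1 := gq_shift_sum (4*n+2) (-(2*n+1))
  have s2 := gq_shift_sum (4*n+2) (-(4*n+1))
  have s3 := gq_shift_sum (4*n+2) (-1)
  rw [Finset.sum_const, Finset.card_range, nsmul_eq_mul]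
  have e3 : (((4*n+2 : ℕ)):ℝ) = 4*n+2 := by push_cast; ring
  rw [e3]
  linarith

lemma gq_delta_pow (s t : ℝ) (hs1 : 0 < s) (ht : s / 2 < t) (D : ℝ) (hD : 0 ≤ D) (n : ℕ)
    (hn : 1 ≤ n) (h : D^2 ≤ 32 * (1 + Real.log n) / n^2) :
    D^t ≤ (32 * (1 + 1 / (2 - s/t)))^(t/2) * (n:ℝ)^(-(s/2)) := by
  have ht0 : 0 < t := by linarith
  have hε : 0 < 2 - s/t := by
    have : s / t < 2 := by rw [div_lt_iff₀ ht0]; linarith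
    linarith
  set ε := 2 - s/t with hεd
  have hn0 : (0:ℝ) < n := by exact_mod_cast hn
  have hn1 : (1:ℝ) ≤ n := by exact_mod_cast hn
  have hlog : Real.log n ≤ (n:ℝ)^ε / ε := Real.log_le_rpow_div hn0.le hε
  have h1 : (1:ℝ) ≤ (n:ℝ)^ε := Real.one_le_rpow hn1 hε.le
  have h2 : D^2 ≤ 32 * (1 + 1/ε) * (n:ℝ)^(ε - 2) := by
    refine h.trans ?_
    rw [Real.rpow_sub hn0, Real.rpow_two, mul_div_assoc', div_le_div_iff_of_pos_right (by positivity)]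
    have : 32 * (1 + 1/ε) * (n:ℝ)^ε = 32 * ((n:ℝ)^ε + (n:ℝ)^ε/ε) := by ring
    rw [this]
    linarith
  have h3 : D^t = (D^2)^(t/2) := by
    rw [← Real.rpow_natCast D 2, ← Real.rpow_mul hD]
    congr 1; push_cast; ring
  rw [h3]
  refine (Real.rpow_le_rpow (by positivity) h2 (by positivity)).trans ?_
  rw [Real.mul_rpow (by positivity) (by positivity), ← Real.rpow_mul hn0.le]
  have : (ε - 2) * (t/2) = -(s/2) := by
    rw [hεd]; field_simp; ring
  rw [this]


end

/-- If `f` is continuous on `[-1,1]` and of class `X^s` with `0 < s < 2`, then the error of the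
`n`-point Gauss rule is `O(n^{-3s/2})`. -/
theorem gauss_rate_small_s (s : ℝ) (hs1 : 0 < s) (hs2 : s < 2) (f : ℝ → ℝ)
    (hf : ContinuousOn f (Set.Icc (-1) 1))
    (hXs : ∃ A : ℝ, ∀ m : ℕ, 1 ≤ m → |chebCoeff f m| ≤ A * (m : ℝ) ^ (-s - 1)) :
    ∃ C > 0, ∀ n : ℕ, 1 ≤ n → ∀ x w : Fin n → ℝ,
      (∀ k, x k ∈ Set.Icc (-1:ℝ) 1) → (∀ k, 0 < w k) →
      (∀ p : Polynomial ℝ, p.natDegree ≤ 2 * n - 1 →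
        ∑ k : Fin n, w k * p.eval (x k) = ∫ t in (-1:ℝ)..1, p.eval t) →
      |(∫ t in (-1:ℝ)..1, f t) - ∑ k : Fin n, w k * f (x k)| ≤ C * (n : ℝ) ^ (-(3 * s / 2)) := by
  obtain ⟨A, hA⟩ := hXs
  have hA0 : 0 ≤ A := by
    have h := hA 1 le_rfl
    simp only [Nat.cast_one, Real.one_rpow, mul_one] at h
    exact (abs_nonneg _).trans h
  obtain ⟨t, ht1, ht2⟩ := exists_between (show s / 2 < min 1 s from lt_min (by linarith) (by linarith))
  have htl : t < 1 := lt_of_lt_of_le ht2 (min_le_left _ _)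
  have hts : t < s := lt_of_lt_of_le ht2 (min_le_right _ _)
  have ht0 : 0 < t := by linarith
  have hε : 0 < 2 - s/t := by
    have : s / t < 2 := by rw [div_lt_iff₀ ht0]; linarith
    linarith
  have hsum : Summable (fun m : ℕ => |chebCoeff f m|) := by
    rw [← summable_nat_add_iff 1]
    have h1 : Summable (fun m : ℕ => A * ((m + 1 : ℕ) : ℝ) ^ (-s - 1)) :=
      ((summable_nat_add_iff 1).2 (Real.summable_nat_rpow.2 (by linarith))).mul_left A
    exact Summable.of_nonneg_of_le (fun m => abs_nonneg _) (fun m => hA (m+1) (by omega)) h1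
  have hZ1 : Summable (fun q : ℕ => ((q + 1 : ℕ) : ℝ) ^ (-s - 1)) :=
    (summable_nat_add_iff 1).2 (Real.summable_nat_rpow.2 (by linarith))
  have hZ2 : Summable (fun q : ℕ => ((q + 1 : ℕ) : ℝ) ^ (-s - 1 + t)) :=
    (summable_nat_add_iff 1).2 (Real.summable_nat_rpow.2 (by linarith))
  set S : ℝ := ∑' r : ℤ, 4 / ((r:ℝ)^2 + 1) with hS
  have hS0 : 0 ≤ S := tsum_nonneg fun r => by positivity
  set Z1 : ℝ := ∑' q : ℕ, ((q + 1 : ℕ) : ℝ) ^ (-s - 1) with hZ1d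
  have hZ10 : 0 ≤ Z1 := tsum_nonneg fun r => by positivity
  set Z2 : ℝ := ∑' q : ℕ, ((q + 1 : ℕ) : ℝ) ^ (-s - 1 + t) with hZ2d
  have hZ20 : 0 ≤ Z2 := tsum_nonneg fun r => by positivity
  set M : ℝ := (32 * (1 + 1 / (2 - s/t)))^(t/2) with hM
  have hM0 : 0 ≤ M := by positivity
  refine ⟨A * (4 + 4 * S * Z1 + 24 * M * Z2) + 1, by positivity, ?_⟩
  intro n hn x w hx hw hex
  have hn0 : (0:ℝ) < n := by exact_mod_cast hn
  have hn1 : (1:ℝ) ≤ n := by exact_mod_cast hn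
  set D : ℝ := ∑ k, w k * |Real.cos ((2*n+1) * Real.arccos (x k))| with hD
  have hD0 : 0 ≤ D := Finset.sum_nonneg fun k _ => mul_nonneg (hw k).le (abs_nonneg _)
  have hDt : D^t ≤ M * (n:ℝ)^(-(s/2)) :=
    gq_delta_pow s t hs1 ht1 D hD0 n hn (gq_delta n hn x w hx hw hex)
  obtain ⟨hE1, hE2⟩ := gq_errT n hn x w hx hw hex D hD t ht0.le htl.le
  have hmain := gq_err_hasSum f hf hsum n x w hx (gq_sum_w n x w hex)
  set e : ℕ → ℝ := fun m => (∫ t in (-1:ℝ)..1, (Polynomial.Chebyshev.T ℝ m).eval t)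
      - ∑ k, w k * (Polynomial.Chebyshev.T ℝ m).eval (x k) with he
  have hblock := gq_block s hs1 A hA0 (chebCoeff f) e hA n hn D t hE2
  set B : ℕ → ℝ := fun q => (A * (4 * S) * (n:ℝ)^(-s-1)) * ((q + 1 : ℕ) : ℝ) ^ (-s - 1)
    + (A * 24 * (n:ℝ)^(-s) * D^t) * ((q + 1 : ℕ) : ℝ) ^ (-s - 1 + t) with hB
  have hBs : Summable B := (hZ1.mul_left _).add (hZ2.mul_left _)
  have hBn : ∀ q, 0 ≤ B q := fun q => by positivity
  have hBsum : ∑' q, B q = (A * (4 * S) * (n:ℝ)^(-s-1)) * Z1 + (A * 24 * (n:ℝ)^(-s) * D^t) * Z2 := by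
    rw [hB, (hZ1.mul_left _).tsum_add (hZ2.mul_left _), tsum_mul_left, tsum_mul_left]
  have hBb : ∀ q, ∑ i ∈ Finset.range (4*n+2),
      |chebCoeff f (2*n+1 + q*(4*n+2) + i) * e (2*n+1 + q*(4*n+2) + i)| ≤ B q := by
    intro q
    refine (hblock q).trans ?_
    have hq : (0:ℝ) < ((q+1:ℕ):ℝ) := by positivity
    rw [Real.mul_rpow hq.le hn0.le, Real.mul_rpow hq.le hD0]
    simp only [hB]
    rw [Real.rpow_add hq (-s-1) t]
    have hns : (n:ℝ)^(-s) = (n:ℝ)^(-s-1) * n := by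
      rw [Real.rpow_sub_one hn0.ne']; field_simp
    rw [hns]
    set X := ((q+1:ℕ):ℝ) ^ (-s-1)
    set Y := ((q+1:ℕ):ℝ) ^ t
    set U := (n:ℝ)^(-s-1)
    have hX : 0 ≤ X := by positivity
    have hY : 0 ≤ Y := by positivity
    have hU : 0 ≤ U := by positivity
    have hDD : 0 ≤ D^t := by positivity
    have h6 : (4*(n:ℝ)+2) ≤ 6 * n := by linarith
    have : (4*(n:ℝ)+2) * (A * X * U * (4 * (Y * D^t))) ≤ 6 * n * (A * X * U * (4 * (Y * D^t))) :=
      mul_le_mul_of_nonneg_right h6 (by positivity)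
    linarith
  have hpart := gq_blocks (fun m => |chebCoeff f m * e m|) (fun m => abs_nonneg _) (2*n+1) (4*n+2)
    (by omega) B hBn hBs hBb
  have hzero : ∀ m ∈ Finset.range (2*n), |chebCoeff f m * e m| = 0 := by
    intro m hm
    rw [Finset.mem_range] at hm
    have := hex (Polynomial.Chebyshev.T ℝ m) (by
      rw [Polynomial.Chebyshev.natDegree_T]
      simp only [Int.natAbs_natCast]; omega)
    simp only [he, this, sub_self, mul_zero, abs_zero]
  have hfirst : ∑ m ∈ Finset.range (2*n+1), |chebCoeff f m * e m| ≤ 4 * A * (n:ℝ)^(-s-1) := by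
    rw [Finset.sum_range_succ, Finset.sum_eq_zero hzero, zero_add, abs_mul]
    have h1 := hA (2*n) (by omega)
    have h2 := hE1 (2*n)
    have h3 : (((2*n:ℕ)):ℝ)^(-s-1) ≤ (n:ℝ)^(-s-1) := by
      apply Real.rpow_le_rpow_of_nonpos hn0 _ (by linarith)
      push_cast; linarith
    calc |chebCoeff f (2*n)| * |e (2*n)| ≤ (A * (n:ℝ)^(-s-1)) * 4 :=
          mul_le_mul (h1.trans (mul_le_mul_of_nonneg_left h3 hA0)) h2 (abs_nonneg _) (by positivity)
      _ = _ := by ring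
  have hlim := hmain.tendsto_sum_nat.abs
  have hle : |(∫ t in (-1:ℝ)..1, f t) - ∑ k : Fin n, w k * f (x k)|
      ≤ 4 * A * (n:ℝ)^(-s-1) + ∑' q, B q := by
    refine le_of_tendsto' hlim fun N => ?_
    refine (Finset.abs_sum_le_sum_abs _ _).trans ?_
    exact (hpart N).trans (by linarith)
  rw [hBsum] at hle
  set R := (n:ℝ)^(-(3*s/2)) with hR
  have hR0 : 0 ≤ R := by positivity
  have hr1 : (n:ℝ)^(-s-1) ≤ R := Real.rpow_le_rpow_of_exponent_le hn1 (by linarith)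
  have hr2 : (n:ℝ)^(-s) * D^t ≤ M * R := by
    have : R = (n:ℝ)^(-s) * (n:ℝ)^(-(s/2)) := by
      rw [hR, ← Real.rpow_add hn0]; congr 1; ring
    rw [this]
    calc (n:ℝ)^(-s) * D^t ≤ (n:ℝ)^(-s) * (M * (n:ℝ)^(-(s/2))) :=
          mul_le_mul_of_nonneg_left hDt (by positivity)
      _ = _ := by ring
  have g1 := mul_le_mul_of_nonneg_left hr1 (show 0 ≤ A * (4 + 4 * S * Z1) by positivity)
  have g2 := mul_le_mul_of_nonneg_left hr2 (show 0 ≤ A * 24 * Z2 by positivity)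
  linarith
end

section
/- Let s ≥ 2 and let f : [-1,1] → ℝ be a continuous function of class X^s. Then there is a constant C > 0 (depending only on f and s) such that for every n ≥ 2 the error of the n-point Gauss rule satisfies |E_n^G(f)| ≤ C · n^{-s-1} · log n. -/
section
open Polynomial

lemma int_deriv_poly (p : ℝ[X]) :
    ∫ t in (-1:ℝ)..1, (derivative p).eval t = p.eval 1 - p.eval (-1) := by
  apply intervalIntegral.integral_eq_sub_of_hasDerivAt (f := fun t => p.eval t)
  · intro x _; exact p.hasDerivAt x
  · exact (derivative p).continuous.intervalIntegrable _ _

lemma eq_zero_of_int_sq (r : ℝ[X]) (h : ∫ t in (-1:ℝ)..1, (r * r).eval t = 0) : r = 0 := by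
  by_contra hr
  have hex : ∃ c ∈ Set.Icc (-1:ℝ) 1, ¬ r.IsRoot c := by
    by_contra hcon
    push Not at hcon
    apply hr
    apply Polynomial.eq_zero_of_infinite_isRoot
    exact (Set.Icc_infinite (by norm_num : (-1:ℝ) < 1)).mono (fun x hx => hcon x hx)
  obtain ⟨c, hc, hc0⟩ := hex
  have : 0 < ∫ t in (-1:ℝ)..1, (r * r).eval t := by
    apply intervalIntegral.integral_pos (by norm_num) (r*r).continuous.continuousOn
    · intro x _; simp only [eval_mul]; exact mul_self_nonneg _
    · refine ⟨c, hc, ?_⟩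
      simp only [eval_mul]
      exact mul_self_pos.mpr hc0
  linarith

lemma int_poly_sub (p q : ℝ[X]) : ∫ t in (-1:ℝ)..1, (p - q).eval t =
    (∫ t in (-1:ℝ)..1, p.eval t) - ∫ t in (-1:ℝ)..1, q.eval t := by
  simp only [eval_sub]
  exact intervalIntegral.integral_sub (p.continuous.intervalIntegrable _ _)
    (q.continuous.intervalIntegrable _ _)

lemma int_poly_add (p q : ℝ[X]) : ∫ t in (-1:ℝ)..1, (p + q).eval t =
    (∫ t in (-1:ℝ)..1, p.eval t) + ∫ t in (-1:ℝ)..1, q.eval t := by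
  simp only [eval_add]
  exact intervalIntegral.integral_add (p.continuous.intervalIntegrable _ _)
    (q.continuous.intervalIntegrable _ _)

lemma legendre_parity (n : ℕ) (p : ℝ[X]) (hm : p.Monic) (hd : p.natDegree = n)
    (hn : 1 ≤ n)
    (ho : ∀ q : ℝ[X], q.natDegree < n → ∫ t in (-1:ℝ)..1, (p * q).eval t = 0) :
    p.comp (-X) = (-1) ^ n * p := by
  set r := p - (-1) ^ n * p.comp (-X) with hr
  have hdc : (p.comp (-X)).natDegree = n := by
    rw [natDegree_comp, natDegree_neg, natDegree_X, hd, mul_one]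
  have hone : ((-1:ℝ[X]) ^ n) = C ((-1) ^ n) := by simp
  have hcoef : ((-1) ^ n * p.comp (-X)).coeff n = 1 := by
    have h1 := hm.neg_one_pow_natDegree_mul_comp_neg_X
    rw [hd] at h1
    have h2 : ((-1) ^ n * p.comp (-X)).natDegree = n := by
      rw [hone, natDegree_C_mul (by simp), hdc]
    rw [Monic, leadingCoeff, h2] at h1
    exact h1
  have hrd : r.natDegree < n := by
    have h1 : r.natDegree ≤ n := by
      apply (natDegree_sub_le _ _).trans
      rw [hone]
      apply max_le hd.le
      exact (natDegree_C_mul_le _ _).trans hdc.le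
    have h2 : r.coeff n = 0 := by
      have h2 : p.coeff n = 1 := by rw [← hd]; exact hm
      rw [hr, coeff_sub, hcoef, h2]; simp
    rcases h1.lt_or_eq with h | h
    · exact h
    · exfalso
      have : r = 0 := by
        rw [← leadingCoeff_eq_zero, leadingCoeff, h, h2]
      rw [this] at h; simp at h; omega
  have hcomp : ∀ q : ℝ[X], ∫ t in (-1:ℝ)..1, (q.comp (-X)).eval t = ∫ t in (-1:ℝ)..1, q.eval t := by
    intro q
    simp only [eval_comp, eval_neg, eval_X]
    rw [intervalIntegral.integral_comp_neg (fun t => q.eval t)]; simp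
  have hr0 : r = 0 := by
    apply eq_zero_of_int_sq
    have e1 : r * r = p * r - (p * ((-1)^n * r.comp (-X))).comp (-X) := by
      simp only [mul_comp, comp_assoc, neg_comp, X_comp, neg_neg, comp_X, pow_comp, one_comp]
      rw [hr]; ring
    rw [e1, int_poly_sub, hcomp, ho _ hrd, ho, sub_zero]
    rw [hone]
    refine (natDegree_C_mul_le _ _).trans_lt ?_
    rwa [natDegree_comp, natDegree_neg, natDegree_X, mul_one]
  rw [hr, sub_eq_zero] at hr0
  conv_rhs => rw [hr0]
  rw [← mul_assoc, ← mul_pow]; simp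

lemma legendre_ode (n : ℕ) (p : ℝ[X]) (hm : p.Monic) (hd : p.natDegree = n)
    (hn : 1 ≤ n)
    (ho : ∀ q : ℝ[X], q.natDegree < n → ∫ t in (-1:ℝ)..1, (p * q).eval t = 0) :
    derivative ((1 - X ^ 2) * derivative p) + C ((n:ℝ) * (n + 1)) * p = 0 := by
  set r := derivative ((1 - X ^ 2) * derivative p) + C ((n:ℝ) * (n + 1)) * p with hr
  have hX : (1 - X ^ 2 : ℝ[X]).natDegree ≤ 2 := by compute_degree
  have hdeg : ∀ q : ℝ[X], (derivative ((1 - X ^ 2) * derivative q)).natDegree ≤ q.natDegree := by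
    intro q
    by_cases hq : q.natDegree = 0
    · rw [natDegree_eq_zero] at hq
      obtain ⟨c, rfl⟩ := hq
      simp
    · have h1 := natDegree_derivative_le ((1 - X ^ 2) * derivative q)
      have h2 := natDegree_mul_le (p := (1 - X ^ 2 : ℝ[X])) (q := derivative q)
      have h3 := natDegree_derivative_le q
      omega
  have hrd : r.natDegree < n := by
    have h1 : r.natDegree ≤ n := by
      apply (natDegree_add_le _ _).trans
      apply max_le ((hdeg p).trans hd.le)
      exact (natDegree_C_mul_le _ _).trans hd.le
    have h2 : r.coeff n = 0 := by
      have h2 : p.coeff n = 1 := by rw [← hd]; exact hm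
      have h3 : p.coeff (n + 1 + 1) = 0 := coeff_eq_zero_of_natDegree_lt (by omega)
      obtain ⟨k, rfl⟩ : ∃ k, n = k + 1 := ⟨n - 1, by omega⟩
      rw [hr, coeff_add, coeff_C_mul, coeff_derivative, sub_mul, one_mul, coeff_sub,
        coeff_derivative, h3, show k + 1 + 1 = k + 2 from rfl, coeff_X_pow_mul, coeff_derivative, h2]
      push_cast; ring
    rcases h1.lt_or_eq with h | h
    · exact h
    · exfalso
      have : r = 0 := by
        rw [← leadingCoeff_eq_zero, leadingCoeff, h, h2]
      rw [this] at h; simp at h; omega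
  apply eq_zero_of_int_sq
  have e1 : r * r = derivative ((1 - X ^ 2) * (derivative p * r - p * derivative r))
      + p * (derivative ((1 - X ^ 2) * derivative r) + C ((n:ℝ) * (n + 1)) * r) := by
    conv_lhs => enter [1]; rw [hr]
    simp only [derivative_mul, derivative_sub, derivative_one, derivative_X_pow]
    ring
  rw [e1, int_poly_add, int_deriv_poly, ho]
  · simp
  · refine (natDegree_add_le _ _).trans_lt (max_lt ((hdeg r).trans_lt hrd) ?_)
    exact (natDegree_C_mul_le _ _).trans_lt hrd

open Real

lemma mono_aux {F F' : ℝ → ℝ} {a b : ℝ} (hab : a ≤ b)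
    (h : ∀ t ∈ Set.Icc a b, HasDerivAt F (F' t) t) (h' : ∀ t ∈ Set.Icc a b, 0 ≤ F' t) :
    F a ≤ F b := by
  have := monotoneOn_of_deriv_nonneg (convex_Icc a b)
    (fun t ht => (h t ht).continuousAt.continuousWithinAt)
    (fun t ht => (h t (interior_subset ht)).differentiableAt.differentiableWithinAt)
    (fun t ht => by rw [(h t (interior_subset ht)).deriv]; exact h' t (interior_subset ht))
  exact this ⟨le_rfl, hab⟩ ⟨hab, le_rfl⟩ hab

set_option maxHeartbeats 1000000 in
/-- zeros of Legendre polynomial in the right half -/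
lemma legendre_zero_bound (n : ℕ) (p : ℝ[X]) (hp : p ≠ 0)
    (hode : derivative ((1 - X ^ 2) * derivative p) + C ((n:ℝ) * (n + 1)) * p = 0)
    (hpar : p.eval 0 = 0 ∨ (derivative p).eval 0 = 0)
    (a : ℝ) (ha0 : 0 < a) (ha : a ≤ π / 2) (hroot : p.eval (cos a) = 0) :
    |cos ((2 * n + 1) * a)| * sin a ≤ 1 / (2 * n + 1) := by
  set l : ℝ := n + 1 / 2 with hl
  have hlpos : 0 < l := by positivity
  set S : ℝ → ℝ := fun t => √(sin t) with hS
  set P : ℝ → ℝ := fun t => p.eval (cos t) with hP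
  set P1 : ℝ → ℝ := fun t => (derivative p).eval (cos t) with hP1
  set P2 : ℝ → ℝ := fun t => (derivative (derivative p)).eval (cos t) with hP2
  set y : ℝ → ℝ := fun t => S t * P t with hy
  set y1 : ℝ → ℝ := fun t => cos t / (2 * S t) * P t - (S t) ^ 3 * P1 t with hy1
  set q : ℝ → ℝ := fun t => l ^ 2 + 1 / (4 * sin t ^ 2) with hq
  have hsin : ∀ b, 0 < b → b ≤ π / 2 → ∀ t ∈ Set.Icc b (π/2), 0 < sin t := fun b hb _ t ht =>
    sin_pos_of_pos_of_lt_pi (by linarith [ht.1]) (by linarith [ht.2, pi_pos])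
  have hSsq : ∀ t, 0 < sin t → S t ^ 2 = sin t := fun t ht => sq_sqrt ht.le
  have hSpos : ∀ t, 0 < sin t → 0 < S t := fun t ht => sqrt_pos.mpr ht
  have dS : ∀ t, 0 < sin t → HasDerivAt S (cos t / (2 * S t)) t := fun t ht =>
    (hasDerivAt_sin t).sqrt ht.ne'
  have dP : ∀ t, HasDerivAt P (P1 t * (- sin t)) t := fun t =>
    (p.hasDerivAt (cos t)).comp t (hasDerivAt_cos t)
  have dP1 : ∀ t, HasDerivAt P1 (P2 t * (- sin t)) t := fun t =>
    ((derivative p).hasDerivAt (cos t)).comp t (hasDerivAt_cos t)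
  have ode : ∀ t, sin t ^ 2 * P2 t - 2 * cos t * P1 t + n * (n + 1) * P t = 0 := by
    intro t
    have := congrArg (eval (cos t)) hode
    simp [derivative_mul] at this
    simp only [hP, hP1, hP2]
    rw [sin_sq]; linarith
  have dy : ∀ t, 0 < sin t → HasDerivAt y (y1 t) t := by
    intro t ht
    have h : HasDerivAt y _ t := (dS t ht).mul (dP t)
    refine h.congr_deriv ?_
    simp only [hy1]
    rw [← hSsq t ht]; ring
  have dy1 : ∀ t, 0 < sin t → HasDerivAt y1 (-(q t) * y t) t := by
    intro t ht
    have h1 := ((hasDerivAt_cos t).div ((dS t ht).const_mul 2)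
      (by have := hSpos t ht; positivity)).mul (dP t)
    have h2 := ((dS t ht).pow 3).mul (dP1 t)
    have h : HasDerivAt y1 _ t := h1.sub h2
    refine h.congr_deriv ?_
    have hs := hSsq t ht
    have hp' := (hSpos t ht).ne'
    have o := ode t
    have hc : cos t ^ 2 = 1 - (S t)^4 := by rw [cos_sq', ← hs]; ring
    simp only [hq, hy, hl]
    rw [← hs] at o ⊢
    simp only [Pi.pow_apply, Pi.div_apply, Nat.cast_ofNat]
    field_simp
    rw [hc]
    linear_combination (16 * S t ^ 4) * o
  have dq : ∀ t, 0 < sin t → HasDerivAt q (- cos t / (2 * sin t ^ 3)) t := by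
    intro t ht
    have h : HasDerivAt q _ t := (((((hasDerivAt_sin t).pow 2).const_mul 4).inv
      (by simp; positivity)).const_add (l^2)).congr_of_eventuallyEq
      (Filter.Eventually.of_forall fun t => by simp [hq])
    refine h.congr_deriv ?_
    simp
    field_simp
    ring
  have hqpos : ∀ t, 0 < q t := fun t => by simp only [hq]; positivity
  set M2 : ℝ := y (π/2) ^ 2 + y1 (π/2) ^ 2 / q (π/2) with hM2
  have hbound : ∀ t ∈ Set.Ioc 0 (π/2), y t ^ 2 ≤ M2 := by
    intro b hb
    have hF : b ≤ π/2 := hb.2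
    have := mono_aux (F := fun t => y t ^ 2 + y1 t ^ 2 / q t)
      (F' := fun t => y1 t ^ 2 * (cos t / (2 * sin t ^ 3)) / q t ^ 2) hF ?_ ?_
    · have h0 : 0 ≤ y1 b ^ 2 / q b := div_nonneg (sq_nonneg _) (hqpos b).le
      linarith
    · intro t ht
      have st := hsin b hb.1 hb.2 t ht
      have h := ((dy t st).pow 2).add (((dy1 t st).pow 2).div (dq t st) (hqpos t).ne')
      refine HasDerivAt.congr_deriv h ?_
      have := (hqpos t).ne'
      simp
      field_simp
      ring
    · intro t ht
      have st := hsin b hb.1 hb.2 t ht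
      have ct : 0 ≤ cos t := cos_nonneg_of_mem_Icc ⟨by linarith [hb.1, ht.1], ht.2⟩
      positivity
  have hyp : y (π/2) = p.eval 0 := by simp [hy, hS, hP]
  have hy1p : y1 (π/2) = - (derivative p).eval 0 := by simp [hy1, hS, hP1]
  have hqp : l ^ 2 ≤ q (π/2) := by simp [hq]
  have hMpos : 0 < M2 := by
    have h0 : 0 ≤ M2 := by
      have := (hqpos (π/2)).le
      positivity
    rcases h0.lt_or_eq with h | h
    · exact h
    · exfalso
      apply hp
      apply Polynomial.eq_zero_of_infinite_isRoot
      refine (Set.Ioo_infinite (show (0:ℝ) < 1 by norm_num)).mono ?_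
      intro x hx
      have h1 : arccos x ∈ Set.Ioc 0 (π/2) := ⟨arccos_pos.mpr hx.2, arccos_le_pi_div_two.mpr hx.1.le⟩
      have h2 := hbound _ h1
      rw [← h] at h2
      have h3 : y (arccos x) = 0 := by nlinarith
      have h4 := hSpos _ (hsin _ h1.1 h1.2 _ ⟨le_rfl, h1.2⟩)
      simp only [hy, hP] at h3
      rw [cos_arccos (by linarith [hx.1]) hx.2.le] at h3
      rcases mul_eq_zero.mp h3 with h5 | h5
      · exact absurd h5 h4.ne'
      · exact h5
  set M := √M2 with hM
  have hMp : 0 < M := sqrt_pos.mpr hMpos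
  have hyM : ∀ t ∈ Set.Ioc 0 (π/2), |y t| ≤ M := fun t ht => abs_le_sqrt (hbound t ht)
  set W : ℝ → ℝ := fun t => y1 t * sin (l * (a - t)) + l * (y t * cos (l * (a - t))) with hW
  have dW : ∀ t, 0 < sin t → HasDerivAt W (-(y t * sin (l * (a - t))) / (4 * sin t ^ 2)) t := by
    intro t ht
    have hi : HasDerivAt (fun t => l * (a - t)) (l * (-1)) t := ((hasDerivAt_id t).const_sub a).const_mul l
    have h : HasDerivAt W _ t := ((dy1 t ht).mul hi.sin).add (((dy t ht).mul hi.cos).const_mul l)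
    refine h.congr_deriv ?_
    simp only [hq]
    field_simp
    ring
  have dcot : ∀ t, 0 < sin t → HasDerivAt (fun t => M / 4 * (cos t / sin t)) (-(M / (4 * sin t ^ 2))) t := by
    intro t ht
    have h := ((hasDerivAt_cos t).div (hasDerivAt_sin t) ht.ne').const_mul (M/4)
    refine HasDerivAt.congr_deriv h ?_
    field_simp
    have := sin_sq_add_cos_sq t
    linear_combination -this
  have key : ∀ t ∈ Set.Icc a (π/2), |y t * sin (l * (a - t))| ≤ M := by
    intro t ht
    rw [abs_mul]
    calc _ ≤ M * 1 := mul_le_mul (hyM t ⟨by linarith [ht.1], ht.2⟩) (abs_sin_le_one _) (abs_nonneg _) hMp.le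
      _ = M := mul_one M
  have hWa : W a = 0 := by simp [hW, hy, hP, hroot]
  have b1 := mono_aux (F := fun t => W t - M / 4 * (cos t / sin t)) ha
    (fun t ht => (dW t (hsin a ha0 ha t ht)).sub (dcot t (hsin a ha0 ha t ht))) (by
      intro t ht
      have := hsin a ha0 ha t ht
      have h2 := abs_le.mp (key t ht)
      rw [sub_neg_eq_add, ← add_div]
      apply div_nonneg _ (by positivity)
      linarith)
  have b2 := mono_aux (F := fun t => -(W t + M / 4 * (cos t / sin t))) ha
    (fun t ht => ((dW t (hsin a ha0 ha t ht)).add (dcot t (hsin a ha0 ha t ht))).neg) (by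
      intro t ht
      have := hsin a ha0 ha t ht
      have h2 := abs_le.mp (key t ht)
      rw [← sub_eq_add_neg, ← sub_div, ← neg_div]
      apply div_nonneg _ (by positivity)
      linarith)
  simp only [hWa, cos_pi_div_two, zero_div, mul_zero] at b1 b2
  have hWp : |W (π/2)| ≤ M / 4 * (cos a / sin a) := abs_le.mpr ⟨by linarith, by linarith⟩
  have hsa := hsin a ha0 ha a ⟨le_rfl, ha⟩
  set β := l * (a - π/2) with hβ
  have hcos : |cos ((2 * n + 1) * a)| = 2 * (|sin β| * |cos β|) := by
    have e : (2 * (n:ℝ) + 1) * a = 2 * β + π / 2 + n * π := by rw [hβ, hl]; ring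
    rw [e, cos_add_nat_mul_pi, abs_mul, abs_pow, abs_neg, abs_one, one_pow, one_mul,
      cos_add_pi_div_two, abs_neg, sin_two_mul, abs_mul, abs_mul]; simp [mul_assoc]
  have hfin : l * (|sin β| * |cos β|) ≤ 1 / 4 * (cos a / sin a) := by
    rcases hpar with h | h
    · rw [h] at hyp
      have e1 : W (π/2) = y1 (π/2) * sin β := by simp [hW, hyp, hβ]
      have e2 : M * l ≤ |y1 (π/2)| := by
        apply abs_le_of_sq_le_sq' _ (abs_nonneg _) |>.2
        rw [sq_abs, mul_pow, hM, sq_sqrt hMpos.le, hM2, hyp]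
        have := hqpos (π/2)
        calc _ ≤ (0 ^ 2 + y1 (π / 2) ^ 2 / q (π / 2)) * q (π/2) := by gcongr
          _ = _ := by field_simp; ring
      rw [e1, abs_mul] at hWp
      have e3 : M * (l * |sin β|) ≤ M * (1 / 4 * (cos a / sin a)) := by
        have := mul_le_mul_of_nonneg_right e2 (abs_nonneg (sin β))
        linarith
      have e4 := le_of_mul_le_mul_left e3 hMp
      have : |sin β| * |cos β| ≤ |sin β| := mul_le_of_le_one_right (abs_nonneg _) (abs_cos_le_one _)
      exact (mul_le_mul_of_nonneg_left this hlpos.le).trans e4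
    · rw [h, neg_zero] at hy1p
      have e1 : W (π/2) = l * (y (π/2) * cos β) := by simp [hW, hy1p, hβ]
      have e2 : M = |y (π/2)| := by
        rw [hM, hM2, hy1p]; simp [sqrt_sq_eq_abs]
      rw [e1, abs_mul, abs_mul, ← e2, abs_of_pos hlpos] at hWp
      have e3 : M * (l * |cos β|) ≤ M * (1 / 4 * (cos a / sin a)) := by linarith
      have e4 := le_of_mul_le_mul_left e3 hMp
      have : |sin β| * |cos β| ≤ |cos β| := mul_le_of_le_one_left (abs_nonneg _) (abs_sin_le_one _)
      exact (mul_le_mul_of_nonneg_left this hlpos.le).trans e4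
  rw [hcos]
  have hl2 : (2 * (n:ℝ) + 1) = 2 * l := by rw [hl]; ring
  rw [hl2, le_div_iff₀ (by positivity)]
  have e5 : 1 / 4 * (cos a / sin a) * sin a = 1 / 4 * cos a := by field_simp
  have e6 := mul_le_mul_of_nonneg_right hfin hsa.le
  rw [e5] at e6
  have := cos_le_one a
  linarith

lemma exact_nodes (n : ℕ) (hn : 2 ≤ n) (x w : Fin n → ℝ)
    (hex : ∀ p : Polynomial ℝ, p.natDegree ≤ 2 * n - 1 →
        ∑ k : Fin n, w k * p.eval (x k) = ∫ t in (-1:ℝ)..1, p.eval t) (k : Fin n)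
    (h1 : -1 < x k) (h2 : x k < 1) :
    |cos ((2 * n + 1) * arccos (x k))| * √(1 - x k ^ 2) ≤ 1 / (2 * n + 1) := by
  set p : ℝ[X] := ∏ i : Fin n, (X - C (x i)) with hp
  have hm : p.Monic := monic_prod_of_monic _ _ (fun i _ => monic_X_sub_C _)
  have hd : p.natDegree = n := by
    rw [hp, natDegree_prod_of_monic _ _ (fun i _ => monic_X_sub_C _)]; simp
  have hr : ∀ i, p.eval (x i) = 0 := by
    intro i
    rw [hp, eval_prod]
    exact Finset.prod_eq_zero (Finset.mem_univ i) (by simp)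
  have ho : ∀ q : ℝ[X], q.natDegree < n → ∫ t in (-1:ℝ)..1, (p * q).eval t = 0 := by
    intro q hq
    rw [← hex]
    · simp [hr]
    · have := natDegree_mul_le (p := p) (q := q)
      omega
  have hode := legendre_ode n p hm hd (by omega) ho
  have hparity := legendre_parity n p hm hd (by omega) ho
  have hev : ∀ t, p.eval (-t) = (-1) ^ n * p.eval t := by
    intro t
    have := congrArg (eval t) hparity
    simpa using this
  have hpar : p.eval 0 = 0 ∨ (derivative p).eval 0 = 0 := by
    rcases Nat.even_or_odd n with he | he
    · right
      have := congrArg (fun r => eval 0 (derivative r)) hparity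
      simp [derivative_comp, he.neg_one_pow] at this
      linarith
    · left
      have := hev 0
      simp [he.neg_one_pow] at this
      linarith
  have main : ∀ t, 0 ≤ t → t < 1 → p.eval t = 0 →
      |cos ((2 * n + 1) * arccos t)| * √(1 - t ^ 2) ≤ 1 / (2 * n + 1) := by
    intro t h0 h1 ht
    have := legendre_zero_bound n p hm.ne_zero hode hpar (arccos t) (arccos_pos.mpr h1)
      (arccos_le_pi_div_two.mpr h0) (by rwa [cos_arccos (by linarith) h1.le])
    rwa [sin_arccos] at this
  rcases le_total 0 (x k) with h | h
  · exact main _ h h2 (hr k)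
  · have := main (- x k) (by linarith) (by linarith) (by rw [hev, hr, mul_zero])
    rw [arccos_neg, neg_sq] at this
    have e : (2 * (n:ℝ) + 1) * (π - arccos (x k)) = (2 * n + 1 : ℕ) * π - (2 * n + 1) * arccos (x k) := by
      push_cast; ring
    rw [e, cos_nat_mul_pi_sub, abs_mul, abs_pow, abs_neg, abs_one, one_pow, one_mul] at this
    exact this

lemma node_bound (n : ℕ) (hn : 2 ≤ n) (x w : Fin n → ℝ)
    (hx : ∀ k, x k ∈ Set.Icc (-1:ℝ) 1)
    (hex : ∀ p : Polynomial ℝ, p.natDegree ≤ 2 * n - 1 →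
        ∑ k : Fin n, w k * p.eval (x k) = ∫ t in (-1:ℝ)..1, p.eval t) (k : Fin n) :
    |cos ((2 * n + 1) * arccos (x k))| ≤ 2 / n * ∑ i ∈ Finset.range n, (x k ^ 2) ^ i := by
  have hn0 : (0:ℝ) < n := by positivity
  obtain ⟨hx1, hx2⟩ := hx k
  have hy1 : x k ^ 2 ≤ 1 := by nlinarith
  have hy0 : 0 ≤ x k ^ 2 := sq_nonneg _
  set y := x k ^ 2 with hy
  by_cases hc : 1 / 2 ≤ y ^ n
  · have : (n:ℝ) / 2 ≤ ∑ i ∈ Finset.range n, y ^ i := by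
      have h : ∑ i ∈ Finset.range n, (1/2:ℝ) ≤ ∑ i ∈ Finset.range n, y ^ i := by
        apply Finset.sum_le_sum
        intro i hi
        exact hc.trans (pow_le_pow_of_le_one hy0 hy1 (Finset.mem_range.mp hi).le)
      simp at h; linarith
    calc _ ≤ (1:ℝ) := abs_cos_le_one _
      _ = 2 / n * (n / 2) := by field_simp
      _ ≤ _ := by gcongr
  · push Not at hc
    have hylt : y < 1 := by
      rcases hy1.lt_or_eq with h | h
      · exact h
      · rw [h] at hc; norm_num at hc
    have hb := exact_nodes n hn x w hex k (by nlinarith) (by nlinarith)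
    rw [← hy] at hb
    have hg : (∑ i ∈ Finset.range n, y ^ i) * (1 - y) = 1 - y ^ n := by
      have := geom_sum_mul y n; linarith
    set G := ∑ i ∈ Finset.range n, y ^ i with hG
    set c := |cos ((2 * n + 1) * arccos (x k))| with hcc
    have hc0 : 0 ≤ c := abs_nonneg _
    have h3 : 1 - y ≤ √(1 - y) := by
      apply le_sqrt_of_sq_le; nlinarith
    have h4 : c * (1 - y) ≤ 1 / n := by
      calc _ ≤ c * √(1 - y) := by gcongr
        _ ≤ _ := hb
        _ ≤ 1 / n := by gcongr; linarith
    have h5 : c * (1 - y) ≤ (2 / n * G) * (1 - y) := by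
      rw [mul_assoc, hg]
      calc _ ≤ 1 / (n:ℝ) := h4
        _ = 2 / n * (1 / 2) := by ring
        _ ≤ _ := by gcongr; linarith
    exact le_of_mul_le_mul_right h5 (by linarith)

lemma one_le_two_log (n : ℕ) (hn : 2 ≤ n) : 1 ≤ 2 * log n := by
  have h : log 2 ≤ log n := log_le_log (by norm_num) (by exact_mod_cast hn)
  have := log_two_gt_d9
  linarith

lemma eps_bound (n : ℕ) (hn : 2 ≤ n) (x w : Fin n → ℝ)
    (hx : ∀ k, x k ∈ Set.Icc (-1:ℝ) 1) (hw : ∀ k, 0 < w k)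
    (hex : ∀ p : Polynomial ℝ, p.natDegree ≤ 2 * n - 1 →
        ∑ k : Fin n, w k * p.eval (x k) = ∫ t in (-1:ℝ)..1, p.eval t) :
    ∑ k, w k * |cos ((2 * n + 1) * arccos (x k))| ≤ 12 * log n / n := by
  have hn0 : (0:ℝ) < n := by positivity
  have h1 : ∑ k, w k * |cos ((2 * n + 1) * arccos (x k))| ≤
      ∑ k, w k * (2 / n * ∑ i ∈ Finset.range n, (x k ^ 2) ^ i) :=
    Finset.sum_le_sum fun k _ => mul_le_mul_of_nonneg_left (node_bound n hn x w hx hex k) (hw k).le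
  have h2 : ∑ k, w k * (2 / n * ∑ i ∈ Finset.range n, (x k ^ 2) ^ i) =
      2 / n * ∑ i ∈ Finset.range n, ∑ k, w k * ((X : ℝ[X]) ^ (2 * i)).eval (x k) := by
    rw [Finset.sum_comm, Finset.mul_sum]
    apply Finset.sum_congr rfl
    intro k _
    simp only [eval_pow, eval_X, pow_mul, Finset.mul_sum]
    apply Finset.sum_congr rfl
    intro i _; ring
  have h3 : ∑ i ∈ Finset.range n, ∑ k, w k * ((X : ℝ[X]) ^ (2 * i)).eval (x k) ≤
      ∑ i ∈ Finset.range n, 2 * ((i:ℝ) + 1)⁻¹ := by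
    apply Finset.sum_le_sum
    intro i hi
    have := Finset.mem_range.mp hi
    rw [hex _ (by rw [natDegree_X_pow]; omega)]
    simp only [eval_pow, eval_X, integral_pow]
    rw [Odd.neg_one_pow ⟨i, rfl⟩]
    rw [one_pow, ← div_eq_mul_inv]
    push_cast
    rw [show (1:ℝ) - -1 = 2 by norm_num]
    gcongr
    linarith [(Nat.cast_nonneg i : (0:ℝ) ≤ i)]
  have h4 : ∑ i ∈ Finset.range n, 2 * ((i:ℝ) + 1)⁻¹ ≤ 2 * (1 + log n) := by
    rw [← Finset.mul_sum]
    gcongr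
    have := harmonic_le_one_add_log n
    simpa [harmonic] using this
  have h5 := one_le_two_log n hn
  calc _ ≤ _ := h1
    _ = _ := h2
    _ ≤ 2 / n * (2 * (1 + log n)) := by gcongr; exact h3.trans h4
    _ ≤ 12 * log n / n := by
      rw [div_mul_eq_mul_div]; exact div_le_div_of_nonneg_right (by linarith) hn0.le

lemma cheb_int (m : ℕ) :
    |∫ t in (-1:ℝ)..1, (Polynomial.Chebyshev.T ℝ m).eval t| ≤ 8 / ((m:ℝ) + 1) ^ 2 := by
  have hT : ∀ t ∈ Set.Icc (-1:ℝ) 1, |(Polynomial.Chebyshev.T ℝ m).eval t| ≤ 1 := by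
    intro t ht
    rw [← cos_arccos ht.1 ht.2, Chebyshev.T_real_cos]
    exact abs_cos_le_one _
  have htriv : |∫ t in (-1:ℝ)..1, (Polynomial.Chebyshev.T ℝ m).eval t| ≤ 2 := by
    have := intervalIntegral.norm_integral_le_of_norm_le_const (a := -1) (b := (1:ℝ))
      (f := fun t => (Polynomial.Chebyshev.T ℝ m).eval t) (C := 1) (by
        intro t ht
        rw [Set.uIoc_of_le (by norm_num)] at ht
        exact hT t ⟨ht.1.le, ht.2⟩)
    norm_num at this ⊢
    exact this
  rcases Nat.lt_or_ge m 2 with h | h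
  · refine htriv.trans ?_
    interval_cases m <;> norm_num
  · obtain ⟨k, rfl⟩ : ∃ k, m = k + 2 := ⟨m - 2, by omega⟩
    have e : (Polynomial.Chebyshev.T ℝ ((k + 2 : ℕ) : ℤ)) = derivative
        (C (1 / (2 * ((k:ℝ) + 3))) * Chebyshev.T ℝ (k + 3) - C (1 / (2 * ((k:ℝ) + 1))) * Chebyshev.T ℝ (k + 1)) := by
      rw [derivative_sub, derivative_C_mul, derivative_C_mul, Chebyshev.T_derivative_eq_U, Chebyshev.T_derivative_eq_U]
      have h2T := Chebyshev.two_mul_T_eq_U_sub_U ℝ k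
      have e1 : C (1 / (2 * ((k:ℝ) + 3))) * ((k:ℝ[X]) + 3) = C (1/2) := by
        rw [show ((k:ℝ[X]) + 3) = C ((k:ℝ) + 3) by rw [C_add, map_ofNat]; simp, ← C_mul]
        congr 1; field_simp
      have e2 : C (1 / (2 * ((k:ℝ) + 1))) * ((k:ℝ[X]) + 1) = C (1/2) := by
        rw [show ((k:ℝ[X]) + 1) = C ((k:ℝ) + 1) by simp, ← C_mul]
        congr 1; field_simp
      have e3 : C (1/2:ℝ) * 2 = 1 := by
        rw [show (2:ℝ[X]) = C 2 from (map_ofNat C 2).symm, ← C_mul]; norm_num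
      rw [show ((k:ℤ) + 3 - 1) = k + 2 by ring, show ((k:ℤ) + 1 - 1) = k by ring]
      push_cast
      linear_combination C (1/2:ℝ) * h2T - Chebyshev.T ℝ (k+2) * e3 - Chebyshev.U ℝ (k+2) * e1 + Chebyshev.U ℝ k * e2
    rw [e, int_deriv_poly]
    simp only [eval_sub, eval_mul, eval_C, Chebyshev.T_eval_one, Chebyshev.T_eval_neg_one]
    have hs : ((k:ℤ) + 3).negOnePow = ((k:ℤ) + 1).negOnePow := by
      rw [show (k:ℤ) + 3 = k + 1 + 2 by ring, Int.negOnePow_add, Int.negOnePow_even 2 ⟨1, by norm_num⟩, mul_one]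
    rw [hs]
    have hk : (0:ℝ) ≤ k := Nat.cast_nonneg k
    have hv : 2 / (((k:ℝ)+1) * (k + 3)) ≤ 8 / (((k + 2 : ℕ) : ℝ) + 1) ^ 2 := by
      push_cast
      rw [div_le_div_iff₀ (by positivity) (by positivity)]
      nlinarith
    refine le_trans ?_ hv
    have hd : 1 / (2 * ((k:ℝ) + 3)) - 1 / (2 * ((k:ℝ) + 1)) = - (1 / ((k+1) * (k+3))) := by
      field_simp; ring
    rcases Int.units_eq_one_or ((k:ℤ) + 1).negOnePow with h | h <;> rw [h]
    · simp; positivity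
    · have : 1 / (2 * ((k:ℝ) + 3)) * 1 - 1 / (2 * ((k:ℝ) + 1)) * 1 -
        (1 / (2 * ((k:ℝ) + 3)) * (((-1 : ℤˣ) : ℤ) : ℝ) - 1 / (2 * ((k:ℝ) + 1)) * (((-1 : ℤˣ) : ℤ) : ℝ)) =
        - (2 / ((k+1) * (k+3))) := by
        push_cast
        linear_combination 2 * hd
      rw [this, abs_neg, abs_of_nonneg (by positivity)]

lemma sum_inv_sq (K : ℕ) : ∑ i ∈ Finset.range K, 1 / ((i:ℝ) + 1) ^ 2 ≤ 2 := by
  have h : ∀ K : ℕ, ∑ i ∈ Finset.range K, 1 / ((i:ℝ) + 1) ^ 2 ≤ 2 - 1 / (K:ℝ) := by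
    intro K
    induction K with
    | zero => norm_num
    | succ K ih =>
      rw [Finset.sum_range_succ]
      push_cast
      rcases Nat.eq_zero_or_pos K with h | h
      · subst h; norm_num
      · have h0 : (0:ℝ) < K := by exact_mod_cast h
        have : 1 / ((K:ℝ) + 1) ^ 2 ≤ 1 / K - 1 / (K + 1) := by
          rw [div_sub_div _ _ h0.ne' (by positivity), div_le_div_iff₀ (by positivity) (by positivity)]
          nlinarith
        linarith
  have h2 : (0:ℝ) ≤ 1 / (K:ℝ) := by positivity
  linarith [h K]

lemma block_sum (n : ℕ) (hn : 2 ≤ n) (x w : Fin n → ℝ)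
    (hx : ∀ k, x k ∈ Set.Icc (-1:ℝ) 1) (hw : ∀ k, 0 < w k)
    (hex : ∀ p : Polynomial ℝ, p.natDegree ≤ 2 * n - 1 →
        ∑ k : Fin n, w k * p.eval (x k) = ∫ t in (-1:ℝ)..1, p.eval t) (j : ℕ) :
    ∑ r ∈ Finset.range (2 * (2 * n + 1)),
      |(∫ t in (-1:ℝ)..1, (Polynomial.Chebyshev.T ℝ (2 * (2 * n + 1) * j + r : ℕ)).eval t) -
        ∑ k, w k * (Polynomial.Chebyshev.T ℝ (2 * (2 * n + 1) * j + r : ℕ)).eval (x k)|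
      ≤ 256 * log n * (j + 1) := by
  have hn0 : (0:ℝ) < n := by positivity
  set N := 2 * n + 1 with hN
  set I : ℕ → ℝ := fun m => ∫ t in (-1:ℝ)..1, (Polynomial.Chebyshev.T ℝ m).eval t with hI
  set S : ℕ → ℝ := fun m => ∑ k, w k * (Polynomial.Chebyshev.T ℝ m).eval (x k) with hS
  set ε := ∑ k, w k * |cos ((2 * n + 1) * arccos (x k))| with hε
  have hεb : ε ≤ 12 * log n / n := eps_bound n hn x w hx hw hex
  have hε0 : 0 ≤ ε := Finset.sum_nonneg fun k _ => mul_nonneg (hw k).le (abs_nonneg _)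
  have hScos : ∀ m, S m = ∑ k, w k * cos (m * arccos (x k)) := by
    intro m
    apply Finset.sum_congr rfl
    intro k _
    conv_lhs => rw [← cos_arccos (hx k).1 (hx k).2]
    rw [Polynomial.Chebyshev.T_real_cos]; simp
  have hwsum : ∑ k, w k = 2 := by
    have := hex 1 (by simp)
    norm_num at this
    exact this
  have hI8 : ∀ m, |I m| ≤ 8 * (1 / ((m:ℝ) + 1) ^ 2) := fun m => by
    rw [mul_one_div]; exact cheb_int m
  have hS2 : ∀ m, |S m| ≤ 2 := by
    intro m
    rw [hScos, ← hwsum]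
    refine (Finset.abs_sum_le_sum_abs _ _).trans (Finset.sum_le_sum fun k _ => ?_)
    rw [abs_mul, abs_of_pos (hw k)]
    exact mul_le_of_le_one_right (hw k).le (abs_cos_le_one _)
  have hSI : ∀ m, m ≤ 2 * n - 1 → S m = I m := by
    intro m hm
    apply hex
    rw [Polynomial.Chebyshev.natDegree_T]; simpa using hm
  -- general pairing
  have hpair : ∀ a b c : ℕ, (∀ t : ℝ, cos (a * t) + cos (b * t) = 2 * cos (N * t) * cos (((N:ℝ) - c) * t)) →
      |S a| ≤ |S b| + 2 * ε := by
    intro a b c h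
    have e : S a = - S b + ∑ k, w k * (2 * cos (N * arccos (x k)) * cos (((N:ℝ) - c) * arccos (x k))) := by
      rw [hScos, hScos, ← Finset.sum_neg_distrib, ← Finset.sum_add_distrib]
      apply Finset.sum_congr rfl
      intro k _
      rw [← h]; ring
    rw [e]
    refine (abs_add_le _ _).trans ?_
    rw [abs_neg]
    gcongr
    refine (Finset.abs_sum_le_sum_abs _ _).trans ?_
    rw [hε, Finset.mul_sum]
    refine Finset.sum_le_sum fun k _ => ?_
    rw [abs_mul, abs_of_pos (hw k), abs_mul, abs_mul, abs_two]
    have e2 : ((N:ℕ):ℝ) = 2 * n + 1 := by rw [hN]; push_cast; ring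
    rw [e2]
    have := mul_le_of_le_one_right (mul_nonneg (hw k).le (mul_nonneg zero_le_two (abs_nonneg (cos ((2 * n + 1) * arccos (x k))))))
      (abs_cos_le_one ((2 * (n:ℝ) + 1 - c) * arccos (x k)))
    linarith
  have hrefl : ∀ r, r ≤ 2 * N → |S r| ≤ |S (2 * N - r)| + 2 * ε := by
    intro r hr
    apply hpair r (2 * N - r) r
    intro t
    rw [Nat.cast_sub hr, cos_add_cos]
    push_cast
    rw [mul_assoc, mul_assoc, mul_comm (cos (N * t)), ← cos_neg (((N:ℝ) - r) * t), mul_comm (cos _)]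
    congr 2 <;> ring_nf
  have hshift : ∀ m, |S (m + 2 * N)| ≤ |S m| + 2 * ε := by
    intro m
    apply hpair (m + 2 * N) m (m + 2 * N)
    intro t
    push_cast
    rw [show ((N:ℝ) - (m + 2 * N)) * t = -((m + N) * t) by ring, cos_neg, cos_add_cos,
      show (((m:ℝ) + 2 * N) * t + m * t) / 2 = (m + N) * t by ring,
      show (((m:ℝ) + 2 * N) * t - m * t) / 2 = N * t by ring]
    ring
  have hshiftj : ∀ j r : ℕ, |S (2 * N * j + r)| ≤ |S r| + j * (2 * ε) := by
    intro j r
    induction j with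
    | zero => simp
    | succ j ih =>
      have := hshift (2 * N * j + r)
      rw [show 2 * N * (j + 1) + r = 2 * N * j + r + 2 * N by ring]
      push_cast
      linarith
  have hSr : ∀ r ∈ Finset.range (2 * N), |S r| ≤ 8 * (1 / ((r:ℝ) + 1) ^ 2)
      + 8 * (1 / (((2 * N - 1 - r : ℕ):ℝ) + 1) ^ 2) + 2 * ε +
      (if r ∈ Finset.Ico (2 * n) (2 * n + 4) then 2 else 0) := by
    intro r hr
    rw [Finset.mem_range] at hr
    have p1 : (0:ℝ) ≤ 8 * (1 / ((r:ℝ) + 1) ^ 2) := by positivity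
    have p2 : (0:ℝ) ≤ 8 * (1 / (((2 * N - 1 - r : ℕ):ℝ) + 1) ^ 2) := by positivity
    have p3 : (0:ℝ) ≤ (if r ∈ Finset.Ico (2 * n) (2 * n + 4) then 2 else 0) := by split_ifs <;> norm_num
    rcases Nat.lt_or_ge r (2 * n) with h | h
    · have := hI8 r
      rw [← hSI r (by omega)] at this
      linarith
    · rcases Nat.lt_or_ge r (2 * n + 4) with h' | h'
      · rw [if_pos (Finset.mem_Ico.mpr ⟨h, h'⟩)]
        linarith [hS2 r]
      · have h1 := hrefl r hr.le
        rw [hSI (2 * N - r) (by omega)] at h1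
        have h2 := hI8 (2 * N - r)
        have h3 : 8 * (1 / (((2 * N - r : ℕ):ℝ) + 1) ^ 2) ≤ 8 * (1 / (((2 * N - 1 - r : ℕ):ℝ) + 1) ^ 2) := by
          gcongr; omega
        linarith
  have hS0 : ∑ r ∈ Finset.range (2 * N), |S r| ≤ 40 + 4 * N * ε := by
    refine (Finset.sum_le_sum hSr).trans ?_
    rw [Finset.sum_add_distrib, Finset.sum_add_distrib, Finset.sum_add_distrib, ← Finset.mul_sum,
      ← Finset.mul_sum]
    have q1 := sum_inv_sq (2 * N)
    have q2 := Finset.sum_range_reflect (fun i : ℕ => 1 / ((i:ℝ) + 1) ^ 2) (2 * N)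
    rw [q2, Finset.sum_const, Finset.card_range, Finset.sum_ite_mem, Finset.sum_const]
    have q3 : (Finset.range (2 * N) ∩ Finset.Ico (2 * n) (2 * n + 4)).card ≤ 4 := by
      refine (Finset.card_le_card Finset.inter_subset_right).trans ?_
      simp
    have q4 : ((Finset.range (2 * N) ∩ Finset.Ico (2 * n) (2 * n + 4)).card : ℝ) ≤ 4 := by exact_mod_cast q3
    rw [nsmul_eq_mul, nsmul_eq_mul]
    push_cast
    linarith
  have hNε : 4 * N * ε ≤ 144 * log n := by
    have hlog : 0 ≤ log n := by linarith [one_le_two_log n hn]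
    have hN3 : (N:ℝ) ≤ 3 * n := by rw [hN]; exact_mod_cast (by omega)
    calc 4 * N * ε ≤ 4 * (3 * n) * (12 * log n / n) := by gcongr
      _ = 144 * log n := by field_simp; ring
  have hterm : ∀ r ∈ Finset.range (2 * N), |I (2 * N * j + r) - S (2 * N * j + r)| ≤
      8 * (1 / ((r:ℝ) + 1) ^ 2) + (|S r| + j * (2 * ε)) := by
    intro r _
    refine (abs_sub _ _).trans ?_
    refine add_le_add ((hI8 _).trans ?_) (hshiftj j r)
    gcongr
    exact_mod_cast Nat.le_add_left _ _
  refine (Finset.sum_le_sum hterm).trans ?_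
  rw [Finset.sum_add_distrib, Finset.sum_add_distrib, ← Finset.mul_sum, Finset.sum_const,
    Finset.card_range, nsmul_eq_mul]
  push_cast
  have q1 := sum_inv_sq (2 * N)
  have h5 := one_le_two_log n hn
  have hj : (0:ℝ) ≤ j := Nat.cast_nonneg j
  have q6 := mul_le_mul_of_nonneg_left hNε hj
  have q7 : 0 ≤ j * log n := mul_nonneg hj (by linarith)
  nlinarith

lemma cheb_expansion (f : ℝ → ℝ) (hf : ContinuousOn f (Set.Icc (-1) 1))
    (hsum : Summable (fun m => |chebCoeff f m|)) (θ : ℝ) :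
    HasSum (fun m : ℕ => chebCoeff f m * cos (m * θ)) (f (cos θ) + chebCoeff f 0 / 2) := by
  have : Fact (0 < 2 * π) := ⟨by positivity⟩
  have hgc : Continuous (fun θ : ℝ => f (cos θ)) :=
    hf.comp_continuous continuous_cos (fun t => ⟨neg_one_le_cos t, cos_le_one t⟩)
  have hper : Function.Periodic (fun θ : ℝ => ((f (cos θ) : ℝ) : ℂ)) (2 * π) := by
    intro t; simp
  let g : C(AddCircle (2 * π), ℂ) := ⟨hper.lift, by
    apply continuous_quot_lift
    exact Complex.continuous_ofReal.comp hgc⟩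
  have hg : ∀ t : ℝ, g (t : AddCircle (2 * π)) = ((f (cos t) : ℝ) : ℂ) := fun t => hper.lift_coe t
  have hfour : ∀ (m : ℤ) (t : ℝ), fourier m (t : AddCircle (2 * π)) =
      Complex.exp (m * t * Complex.I) := by
    intro m t
    rw [fourier_coe_apply]
    congr 1
    have : (π : ℂ) ≠ 0 := by exact_mod_cast pi_ne_zero
    push_cast
    field_simp
  have hcoef : ∀ m : ℤ, fourierCoeff g m = ((chebCoeff f m.natAbs / 2 : ℝ) : ℂ) := by
    intro m
    rw [fourierCoeff_eq_intervalIntegral g m (-π)]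
    rw [show -π + 2 * π = π by ring]
    have hcont : Continuous (fun t : ℝ => fourier (-m) (t : AddCircle (2 * π)) • g (t : AddCircle (2 * π))) := by
      fun_prop
    rw [← intervalIntegral.integral_add_adjacent_intervals (b := 0) (hcont.intervalIntegrable _ _)
      (hcont.intervalIntegrable _ _)]
    have h1 : ∫ t in (-π)..0, fourier (-m) (t : AddCircle (2 * π)) • g (t : AddCircle (2 * π)) =
        ∫ t in (0:ℝ)..π, fourier (-m) ((-t : ℝ) : AddCircle (2 * π)) • g ((-t : ℝ) : AddCircle (2 * π)) := by
      rw [intervalIntegral.integral_comp_neg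
        (fun t : ℝ => fourier (-m) (t : AddCircle (2 * π)) • g (t : AddCircle (2 * π)))]
      simp
    have hcont2 : Continuous (fun t : ℝ => fourier (-m) ((-t : ℝ) : AddCircle (2 * π)) • g ((-t : ℝ) : AddCircle (2 * π))) :=
      hcont.comp continuous_neg
    rw [h1, ← intervalIntegral.integral_add (hcont2.intervalIntegrable _ _)
      (hcont.intervalIntegrable _ _)]
    have h2 : ∀ t : ℝ, fourier (-m) ((-t : ℝ) : AddCircle (2 * π)) • g ((-t : ℝ) : AddCircle (2 * π)) +
        fourier (-m) (t : AddCircle (2 * π)) • g (t : AddCircle (2 * π)) =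
        ((2 * (f (cos t) * cos (m.natAbs * t)) : ℝ) : ℂ) := by
      intro t
      rw [hfour, hfour, hg, hg, cos_neg]
      have hc : cos ((m.natAbs : ℝ) * t) = cos (m * t) := by
        rw [Nat.cast_natAbs, Int.cast_abs]
        rcases abs_choice (m:ℝ) with h | h <;> rw [h]
        rw [neg_mul, cos_neg]
      rw [hc]
      push_cast
      rw [Complex.cos, smul_eq_mul, smul_eq_mul]
      ring_nf
    simp_rw [h2]
    rw [intervalIntegral.integral_ofReal, intervalIntegral.integral_const_mul]
    rw [chebCoeff, Complex.real_smul, ← Complex.ofReal_mul]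
    congr 1
    have := pi_ne_zero
    field_simp
  have hsC : Summable (fun m : ℕ => ((chebCoeff f m / 2 : ℝ) : ℂ)) := by
    exact Complex.summable_ofReal.mpr (hsum.of_abs.div_const 2)
  have hsF : Summable (fourierCoeff g) := by
    apply Summable.of_nat_of_neg
    · simpa [hcoef] using hsC
    · simpa [hcoef] using hsC
  have h1 := (has_pointwise_sum_fourier_series_of_summable hsF (θ : AddCircle (2 * π))).nat_add_neg
  rw [← Complex.hasSum_ofReal]
  convert! h1 using 1
  · ext m
    simp only [hcoef, hfour, smul_eq_mul, Int.natAbs_neg, Int.natAbs_natCast]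
    push_cast
    rw [Complex.cos]
    ring_nf
  · rw [hg, hcoef, hfour]; simp

end

/-- If `f` is continuous on `[-1,1]` and of class `X^s` with `s ≥ 2`, then the error of the
`n`-point Gauss rule is `O(n^{-s-1} log n)`. -/
theorem gauss_rate_log (s : ℝ) (hs : 2 ≤ s) (f : ℝ → ℝ)
    (hf : ContinuousOn f (Set.Icc (-1) 1))
    (hXs : ∃ A : ℝ, ∀ m : ℕ, 1 ≤ m → |chebCoeff f m| ≤ A * (m : ℝ) ^ (-s - 1)) :
    ∃ C > 0, ∀ n : ℕ, 2 ≤ n → ∀ x w : Fin n → ℝ,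
      (∀ k, x k ∈ Set.Icc (-1:ℝ) 1) → (∀ k, 0 < w k) →
      (∀ p : Polynomial ℝ, p.natDegree ≤ 2 * n - 1 →
        ∑ k : Fin n, w k * p.eval (x k) = ∫ t in (-1:ℝ)..1, p.eval t) →
      |(∫ t in (-1:ℝ)..1, f t) - ∑ k : Fin n, w k * f (x k)| ≤ C * (n : ℝ) ^ (-s - 1) * Real.log n := by
  obtain ⟨A, hA⟩ := hXs
  have hA0 : 0 ≤ A := by
    have := (abs_nonneg _).trans (hA 1 le_rfl)
    simpa using this
  have hsum : Summable (fun m => |chebCoeff f m|) := by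
    rw [← summable_nat_add_iff 1]
    have h1 : Summable (fun m : ℕ => A * (m : ℝ) ^ (-s - 1)) :=
      (Real.summable_nat_rpow.mpr (by linarith)).mul_left A
    exact Summable.of_nonneg_of_le (fun m => abs_nonneg _) (fun m => hA (m + 1) (by omega))
      ((summable_nat_add_iff 1).mpr h1)
  refine ⟨512 * A + 1, by positivity, ?_⟩
  intro n hn x w hx hw hex
  have hn0 : (0:ℝ) < n := by positivity
  have hlog : 0 ≤ Real.log n := by linarith [one_le_two_log n hn]
  set a := chebCoeff f with ha
  set I : ℕ → ℝ := fun m => ∫ t in (-1:ℝ)..1, (Polynomial.Chebyshev.T ℝ m).eval t with hI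
  set S : ℕ → ℝ := fun m => ∑ k, w k * (Polynomial.Chebyshev.T ℝ m).eval (x k) with hS
  have hT : ∀ m : ℕ, ∀ t ∈ Set.Icc (-1:ℝ) 1, |(Polynomial.Chebyshev.T ℝ m).eval t| ≤ 1 := by
    intro m t ht
    rw [← Real.cos_arccos ht.1 ht.2, Polynomial.Chebyshev.T_real_cos]
    exact Real.abs_cos_le_one _
  have hexp : ∀ t ∈ Set.Icc (-1:ℝ) 1,
      HasSum (fun m : ℕ => a m * (Polynomial.Chebyshev.T ℝ m).eval t) (f t + a 0 / 2) := by
    intro t ht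
    have := cheb_expansion f hf hsum (Real.arccos t)
    rw [Real.cos_arccos ht.1 ht.2] at this
    convert! this using 2 with m
    conv_lhs => rw [← Real.cos_arccos ht.1 ht.2]
    rw [Polynomial.Chebyshev.T_real_cos]; simp [ha]
  have hwsum : ∑ k, w k = 2 := by
    have := hex 1 (by simp)
    norm_num at this
    exact this
  have hSsum : HasSum (fun m => a m * S m) (∑ k, w k * (f (x k) + a 0 / 2)) := by
    have h1 := hasSum_sum (s := Finset.univ) (fun k _ => (hexp (x k) (hx k)).mul_left (w k))
    convert! h1 using 2 with m
    rw [hS, Finset.mul_sum]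
    apply Finset.sum_congr rfl
    intro k _; ring
  have huIoc : ∀ t ∈ Set.uIoc (-1:ℝ) 1, t ∈ Set.Icc (-1:ℝ) 1 := by
    intro t ht
    rw [Set.uIoc_of_le (by norm_num)] at ht
    exact ⟨ht.1.le, ht.2⟩
  have hIsum : HasSum (fun m => a m * I m) (∫ t in (-1:ℝ)..1, (f t + a 0 / 2)) := by
    have h1 := intervalIntegral.hasSum_integral_of_dominated_convergence
      (μ := MeasureTheory.volume) (a := (-1:ℝ)) (b := 1)
      (F := fun (m : ℕ) t => a m * (Polynomial.Chebyshev.T ℝ m).eval t) (f := fun t => f t + a 0 / 2)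
      (fun m _ => |a m|) ?_ ?_ ?_ ?_ ?_
    · simpa only [intervalIntegral.integral_const_mul] using h1
    · intro m
      exact (continuous_const.mul (Polynomial.Chebyshev.T ℝ m).continuous).aestronglyMeasurable
    · intro m
      refine Filter.Eventually.of_forall fun t ht => ?_
      rw [Real.norm_eq_abs, abs_mul]
      exact mul_le_of_le_one_right (abs_nonneg _) (hT m t (huIoc t ht))
    · exact Filter.Eventually.of_forall fun t _ => hsum
    · exact intervalIntegrable_const
    · exact Filter.Eventually.of_forall fun t ht => hexp t (huIoc t ht)
  have hfint : IntervalIntegrable f MeasureTheory.volume (-1) 1 := by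
    apply ContinuousOn.intervalIntegrable
    rwa [Set.uIcc_of_le (by norm_num)]
  have htot : HasSum (fun m => a m * (I m - S m))
      ((∫ t in (-1:ℝ)..1, f t) - ∑ k : Fin n, w k * f (x k)) := by
    convert! hIsum.sub hSsum using 1
    · ext m; ring
    · rw [intervalIntegral.integral_add hfint intervalIntegrable_const]
      simp only [mul_add, Finset.sum_add_distrib, ← Finset.sum_mul, hwsum,
        intervalIntegral.integral_const, smul_eq_mul]
      ring
  have hEzero : ∀ m, m ≤ 2 * n - 1 → I m - S m = 0 := by
    intro m hm
    rw [sub_eq_zero]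
    symm
    apply hex
    rw [Polynomial.Chebyshev.natDegree_T]; simpa using hm
  set N := 2 * n + 1 with hN
  set D := A * (n:ℝ) ^ (-s - 1) with hD
  have hD0 : 0 ≤ D := by positivity
  have hterm : ∀ j r : ℕ, |a (2 * N * j + r) * (I (2 * N * j + r) - S (2 * N * j + r))| ≤
      D * (1 / ((j:ℝ) + 1) ^ 3) * |I (2 * N * j + r) - S (2 * N * j + r)| := by
    intro j r
    set m := 2 * N * j + r with hm
    rw [abs_mul]
    rcases Nat.lt_or_ge m (2 * n) with h | h
    · rw [hEzero m (by omega)]; simp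
    · have hmn : n * (j + 1) ≤ m := by
        rcases Nat.eq_zero_or_pos j with h0 | h0
        · subst h0; omega
        · rw [hm, hN]; nlinarith
      have hmn' : (n:ℝ) * ((j:ℝ) + 1) ≤ m := by exact_mod_cast hmn
      have hj1 : (1:ℝ) ≤ (j:ℝ) + 1 := by linarith [(Nat.cast_nonneg j : (0:ℝ) ≤ j)]
      apply mul_le_mul_of_nonneg_right _ (abs_nonneg _)
      refine (hA m (by omega)).trans ?_
      rw [hD, mul_assoc]
      apply mul_le_mul_of_nonneg_left _ hA0
      calc (m:ℝ) ^ (-s - 1) ≤ ((n:ℝ) * ((j:ℝ) + 1)) ^ (-s - 1) :=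
            Real.rpow_le_rpow_of_nonpos (by positivity) hmn' (by linarith)
        _ = (n:ℝ) ^ (-s - 1) * ((j:ℝ) + 1) ^ (-s - 1) := Real.mul_rpow hn0.le (by positivity)
        _ ≤ (n:ℝ) ^ (-s - 1) * ((j:ℝ) + 1) ^ (-(3:ℝ)) := by
            gcongr
            linarith
        _ = _ := by
            rw [Real.rpow_neg (by positivity), one_div]
            norm_cast
  have hblock : ∀ J : ℕ, ∑ m ∈ Finset.range (2 * N * J), |a m * (I m - S m)| ≤
      256 * D * Real.log n * ∑ j ∈ Finset.range J, 1 / ((j:ℝ) + 1) ^ 2 := by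
    intro J
    induction J with
    | zero => simp
    | succ J ih =>
      rw [show 2 * N * (J + 1) = 2 * N * J + 2 * N by ring, Finset.sum_range_add, Finset.sum_range_succ,
        mul_add (256 * D * Real.log n)]
      refine add_le_add ih ?_
      refine (Finset.sum_le_sum fun r _ => hterm J r).trans ?_
      rw [← Finset.mul_sum]
      have hb := block_sum n hn x w hx hw hex J
      calc _ ≤ D * (1 / ((J:ℝ) + 1) ^ 3) * (256 * Real.log n * (J + 1)) := by
            gcongr
        _ = _ := by field_simp
  have hpart : ∀ M : ℕ, |∑ m ∈ Finset.range M, a m * (I m - S m)| ≤ 512 * D * Real.log n := by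
    intro M
    calc _ ≤ ∑ m ∈ Finset.range M, |a m * (I m - S m)| := Finset.abs_sum_le_sum_abs _ _
      _ ≤ ∑ m ∈ Finset.range (2 * N * M), |a m * (I m - S m)| := by
          apply Finset.sum_le_sum_of_subset_of_nonneg
          · apply Finset.range_mono
            exact Nat.le_mul_of_pos_left M (by omega)
          · intro _ _ _; exact abs_nonneg _
      _ ≤ _ := hblock M
      _ ≤ 256 * D * Real.log n * 2 := by
          gcongr
          exact sum_inv_sq M
      _ = _ := by ring
  have hlim := le_of_tendsto htot.tendsto_sum_nat.abs (Filter.Eventually.of_forall hpart)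
  refine hlim.trans ?_
  apply mul_le_mul_of_nonneg_right _ hlog
  rw [hD, ← mul_assoc]
  apply mul_le_mul_of_nonneg_right _ (by positivity)
  linarith
end

section
/- Let s > 0 and −1 < ξ < 1, and let f_s : [−1,1] → ℝ be given by f_s(x) = |x − ξ|^s. Then f_s is of class X^s; that is, its Chebyshev coefficients satisfy a_m = O(m^{−s−1}) as m → ∞ (there is A > 0 with |a_m| ≤ A·m^{−s−1} for all m ≥ 1). -/
open MeasureTheory intervalIntegral

lemma aux_lower (φ : ℝ) (h0 : 0 < φ) (h1 : φ < Real.pi) :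
    ∃ c > 0, ∀ θ : ℝ, 0 ≤ θ → θ ≤ φ → c * (φ - θ) ≤ Real.cos θ - Real.cos φ := by
  have hpi := Real.pi_pos
  have hd : 0 < min (φ / 2) (Real.pi - φ) := lt_min (by linarith) (by linarith)
  set d := min (φ / 2) (Real.pi - φ) with hdd
  have hd1 : d ≤ φ / 2 := min_le_left _ _
  have hd2 : d ≤ Real.pi - φ := min_le_right _ _
  have hk : 0 < 2 / Real.pi := by positivity
  refine ⟨2 * (2 / Real.pi * d) * (2 / Real.pi / 2), by positivity, fun θ a b => ?_⟩
  have e1 : 2 / Real.pi * d ≤ Real.sin ((θ + φ) / 2) := by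
    by_cases hh : (θ + φ) / 2 ≤ Real.pi / 2
    · have := Real.mul_le_sin (x := (θ + φ) / 2) (by linarith) hh
      have h3 : 2 / Real.pi * d ≤ 2 / Real.pi * ((θ + φ) / 2) :=
        mul_le_mul_of_nonneg_left (by linarith) hk.le
      linarith
    · have := Real.mul_le_sin (x := Real.pi - (θ + φ) / 2) (by linarith) (by linarith)
      rw [Real.sin_pi_sub] at this
      have h3 : 2 / Real.pi * d ≤ 2 / Real.pi * (Real.pi - (θ + φ) / 2) :=
        mul_le_mul_of_nonneg_left (by linarith) hk.le
      linarith
  have e2 : 2 / Real.pi * ((φ - θ) / 2) ≤ Real.sin ((φ - θ) / 2) :=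
    Real.mul_le_sin (by linarith) (by linarith)
  have e3 : Real.cos θ - Real.cos φ = 2 * Real.sin ((θ + φ) / 2) * Real.sin ((φ - θ) / 2) := by
    rw [Real.cos_sub_cos, show (θ - φ) / 2 = -((φ - θ) / 2) by ring, Real.sin_neg]
    ring
  rw [e3]
  have := mul_le_mul e1 e2 (mul_nonneg hk.le (by linarith))
    (le_trans (by positivity) e1)
  nlinarith

lemma aux_pos (φ : ℝ) (h1 : φ < Real.pi) (θ : ℝ) (a : 0 ≤ θ) (b : θ < φ) :
    0 < Real.cos θ - Real.cos φ :=
  sub_pos.2 (Real.cos_lt_cos_of_nonneg_of_le_pi a h1.le b)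

lemma aux_dom (c u v s : ℝ) (hc : 0 < c) (hs : s ≤ 0) (hu : 0 < u) (h : c * u ≤ v) :
    v ^ s ≤ c ^ s * u ^ s := by
  rw [← Real.mul_rpow hc.le hu.le]
  exact Real.rpow_le_rpow_of_nonpos (by positivity) h hs

lemma aux_intg (φ s : ℝ) (h0 : 0 < φ) (h1 : φ < Real.pi) (hs : -1 < s) :
    IntervalIntegrable (fun θ => (Real.cos θ - Real.cos φ) ^ s) volume 0 φ := by
  by_cases hs0 : 0 ≤ s
  · apply Continuous.intervalIntegrable
    exact (Real.continuous_cos.sub continuous_const).rpow_const (fun _ => Or.inr hs0)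
  · push Not at hs0
    obtain ⟨c, hc, H⟩ := aux_lower φ h0 h1
    have hi : IntervalIntegrable (fun θ : ℝ => c ^ s * (φ - θ) ^ s) volume 0 φ := by
      have := (intervalIntegrable_rpow' (a := φ) (b := 0) hs).comp_sub_left φ
      simp only [sub_self, sub_zero] at this
      exact this.const_mul _
    refine hi.mono_fun ?_ ?_
    · apply Measurable.aestronglyMeasurable
      fun_prop
    · rw [Set.uIoc_of_le h0.le]
      filter_upwards [ae_restrict_mem measurableSet_Ioc] with θ hθ
      rcases hθ.2.eq_or_lt with e | e
      · subst e; simp [Real.zero_rpow hs0.ne]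
      · have hu := aux_pos φ h1 θ hθ.1.le e
        rw [Real.norm_of_nonneg (Real.rpow_nonneg hu.le _), Real.norm_of_nonneg
          (mul_nonneg (Real.rpow_nonneg hc.le _) (Real.rpow_nonneg (by linarith) _))]
        exact aux_dom c _ _ s hc hs0.le (by linarith) (H θ hθ.1.le hθ.2)

noncomputable def auxJ (φ s : ℝ) (m : ℕ) : ℝ :=
  ∫ θ in (0:ℝ)..φ, (Real.cos θ - Real.cos φ) ^ s * Real.cos (m * θ)

lemma aux_intg_mul (φ s : ℝ) (h0 : 0 < φ) (h1 : φ < Real.pi) (hs : -1 < s) (g : ℝ → ℝ)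
    (hg : Continuous g) :
    IntervalIntegrable (fun θ => (Real.cos θ - Real.cos φ) ^ s * g θ) volume 0 φ :=
  (aux_intg φ s h0 h1 hs).mul_continuousOn hg.continuousOn

lemma aux_deriv (φ s : ℝ) (h1 : φ < Real.pi) (θ : ℝ) (a : 0 ≤ θ) (b : θ < φ) :
    HasDerivAt (fun θ => (Real.cos θ - Real.cos φ) ^ s)
      (-s * ((Real.cos θ - Real.cos φ) ^ (s - 1) * Real.sin θ)) θ := by
  have hu := aux_pos φ h1 θ a b
  have := ((Real.hasDerivAt_cos θ).sub_const (Real.cos φ)).rpow_const (p := s) (Or.inl hu.ne')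
  convert this using 1
  ring

lemma aux_deriv_mul (φ s m : ℝ) (h1 : φ < Real.pi) (θ : ℝ) (a : 0 ≤ θ) (b : θ < φ) :
    HasDerivAt (fun θ => (Real.cos θ - Real.cos φ) ^ s * Real.sin (m * θ))
      (-s * ((Real.cos θ - Real.cos φ) ^ (s - 1) * Real.sin θ) * Real.sin (m * θ)
        + m * ((Real.cos θ - Real.cos φ) ^ s * Real.cos (m * θ))) θ := by
  have h2 : HasDerivAt (fun θ => Real.sin (m * θ)) (Real.cos (m * θ) * m) θ := by
    simpa using ((hasDerivAt_id θ).const_mul m).sin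
  refine ((aux_deriv φ s h1 θ a b).fun_mul h2).congr_deriv ?_
  ring

lemma aux_rec (φ s : ℝ) (h0 : 0 < φ) (h1 : φ < Real.pi) (hs : 0 < s) (m : ℕ) :
    ((m + 1 : ℕ) : ℝ) * auxJ φ s (m + 1) = s / 2 * (auxJ φ (s - 1) m - auxJ φ (s - 1) (m + 2)) := by
  have hi1 : IntervalIntegrable (fun θ => -s * ((Real.cos θ - Real.cos φ) ^ (s - 1) * Real.sin θ)
      * Real.sin (((m + 1 : ℕ) : ℝ) * θ)) volume 0 φ := by
    have := (aux_intg_mul φ (s - 1) h0 h1 (by linarith)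
      (fun θ => Real.sin θ * Real.sin (((m + 1 : ℕ) : ℝ) * θ)) (by fun_prop)).const_mul (-s)
    refine this.congr (fun θ _ => ?_)
    ring
  have hi2 : IntervalIntegrable (fun θ => ((m + 1 : ℕ) : ℝ) * ((Real.cos θ - Real.cos φ) ^ s
      * Real.cos (((m + 1 : ℕ) : ℝ) * θ))) volume 0 φ :=
    (aux_intg_mul φ s h0 h1 (by linarith) _ (by fun_prop)).const_mul _
  have key := integral_eq_sub_of_hasDerivAt_of_le h0.le
    (f := fun θ => (Real.cos θ - Real.cos φ) ^ s * Real.sin (((m + 1 : ℕ) : ℝ) * θ))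
    (Continuous.continuousOn (((Real.continuous_cos.sub continuous_const).rpow_const
      (fun _ => Or.inr hs.le)).mul (by fun_prop)))
    (fun θ hθ => aux_deriv_mul φ s _ h1 θ hθ.1.le hθ.2) (hi1.add hi2)
  rw [integral_add hi1 hi2, intervalIntegral.integral_const_mul] at key
  simp only [sub_self, Real.zero_rpow hs.ne', zero_mul, mul_zero, Real.sin_zero] at key
  have e : ∫ θ in (0:ℝ)..φ, -s * ((Real.cos θ - Real.cos φ) ^ (s - 1) * Real.sin θ)
      * Real.sin (((m + 1 : ℕ) : ℝ) * θ)
      = -(s / 2) * (auxJ φ (s - 1) m - auxJ φ (s - 1) (m + 2)) := by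
    unfold auxJ
    rw [← integral_sub (aux_intg_mul φ (s - 1) h0 h1 (by linarith) _ (by fun_prop))
      (aux_intg_mul φ (s - 1) h0 h1 (by linarith) _ (by fun_prop)),
      ← intervalIntegral.integral_const_mul]
    refine integral_congr (fun θ _ => ?_)
    have e1 : Real.cos ((m : ℝ) * θ) = Real.cos (((m + 1 : ℕ) : ℝ) * θ - θ) := by
      congr 1; push_cast; ring
    have e2 : Real.cos (((m + 2 : ℕ) : ℝ) * θ) = Real.cos (((m + 1 : ℕ) : ℝ) * θ + θ) := by
      congr 1; push_cast; ring
    rw [e1, e2, Real.cos_sub, Real.cos_add]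
    ring
  rw [e] at key
  unfold auxJ at key ⊢
  linarith

lemma aux_far (φ s : ℝ) (h1 : φ < Real.pi) (hs : s ≤ 0) (m : ℕ) (b : ℝ)
    (hb0 : 0 ≤ b) (hb : b < φ) :
    (m : ℝ) * |∫ θ in (0:ℝ)..b, (Real.cos θ - Real.cos φ) ^ s * Real.cos (m * θ)|
      ≤ 2 * (Real.cos b - Real.cos φ) ^ s := by
  have hc : ∀ r : ℝ, ContinuousOn (fun θ => (Real.cos θ - Real.cos φ) ^ r) (Set.uIcc 0 b) := by
    intro r
    rw [Set.uIcc_of_le hb0]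
    exact (Real.continuous_cos.sub continuous_const).continuousOn.rpow_const
      (fun θ hθ => Or.inl (aux_pos φ h1 θ hθ.1 (by linarith [hθ.2])).ne')
  have hi0 : IntervalIntegrable (fun θ => -s * ((Real.cos θ - Real.cos φ) ^ (s - 1) * Real.sin θ))
      volume 0 b :=
    (continuousOn_const.mul ((hc _).mul Real.continuous_sin.continuousOn)).intervalIntegrable
  have hi1 : IntervalIntegrable (fun θ => -s * ((Real.cos θ - Real.cos φ) ^ (s - 1) * Real.sin θ)
      * Real.sin ((m : ℝ) * θ)) volume 0 b :=
    hi0.mul_continuousOn (by fun_prop)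
  have hi2 : IntervalIntegrable (fun θ => (m : ℝ) * ((Real.cos θ - Real.cos φ) ^ s
      * Real.cos ((m : ℝ) * θ))) volume 0 b :=
    (continuousOn_const.mul ((hc _).mul (by fun_prop))).intervalIntegrable
  have k1 := integral_eq_sub_of_hasDerivAt
    (fun θ hθ => by
      rw [Set.uIcc_of_le hb0] at hθ
      exact aux_deriv_mul φ s m h1 θ hθ.1 (lt_of_le_of_lt hθ.2 hb)) (hi1.add hi2)
  have k2 := integral_eq_sub_of_hasDerivAt
    (fun θ hθ => by
      rw [Set.uIcc_of_le hb0] at hθ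
      exact aux_deriv φ s h1 θ hθ.1 (lt_of_le_of_lt hθ.2 hb)) hi0
  rw [integral_add hi1 hi2, intervalIntegral.integral_const_mul] at k1
  simp only [mul_zero, Real.sin_zero, sub_zero] at k1
  have k3 : |∫ θ in (0:ℝ)..b, -s * ((Real.cos θ - Real.cos φ) ^ (s - 1) * Real.sin θ)
      * Real.sin ((m : ℝ) * θ)| ≤
      ∫ θ in (0:ℝ)..b, -s * ((Real.cos θ - Real.cos φ) ^ (s - 1) * Real.sin θ) := by
    rw [← Real.norm_eq_abs]
    refine norm_integral_le_of_norm_le hb0 (Filter.Eventually.of_forall fun θ hθ => ?_) hi0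
    rw [norm_mul]
    have hn : 0 ≤ -s * ((Real.cos θ - Real.cos φ) ^ (s - 1) * Real.sin θ) := by
      by_cases hbb : θ < φ
      · exact mul_nonneg (by linarith) (mul_nonneg
          (Real.rpow_nonneg (aux_pos φ h1 θ hθ.1.le hbb).le _)
          (Real.sin_nonneg_of_nonneg_of_le_pi hθ.1.le (by linarith)))
      · linarith [hθ.2]
    rw [Real.norm_of_nonneg hn, Real.norm_eq_abs]
    exact mul_le_of_le_one_right hn (Real.abs_sin_le_one _)
  have p0 : 0 ≤ (Real.cos 0 - Real.cos φ) ^ s :=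
    Real.rpow_nonneg (aux_pos φ h1 0 le_rfl (by linarith)).le _
  have pb : 0 ≤ (Real.cos b - Real.cos φ) ^ s :=
    Real.rpow_nonneg (aux_pos φ h1 b hb0 hb).le _
  have k4 : |(Real.cos b - Real.cos φ) ^ s * Real.sin (m * b)| ≤ (Real.cos b - Real.cos φ) ^ s := by
    rw [abs_mul, abs_of_nonneg pb]
    exact mul_le_of_le_one_right pb (Real.abs_sin_le_one _)
  rw [show ∀ x : ℝ, (m : ℝ) * |x| = |(m : ℝ) * x| from fun x => by
    rw [abs_mul, abs_of_nonneg (Nat.cast_nonneg m : (0:ℝ) ≤ m)]]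
  rw [abs_le] at *
  constructor <;> linarith [k3.1, k3.2, k4.1, k4.2]

lemma aux_near (φ s c : ℝ) (h0 : 0 < φ) (h1 : φ < Real.pi) (hs : -1 < s) (hs0 : s ≤ 0)
    (hc : 0 < c)
    (H : ∀ θ : ℝ, 0 ≤ θ → θ ≤ φ → c * (φ - θ) ≤ Real.cos θ - Real.cos φ)
    (m : ℕ) (h : ℝ) (hh : 0 < h) (hh' : h ≤ φ) :
    |∫ θ in (φ - h)..φ, (Real.cos θ - Real.cos φ) ^ s * Real.cos (m * θ)|
      ≤ c ^ s * (h ^ (s + 1) / (s + 1)) := by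
  have hi : IntervalIntegrable (fun θ : ℝ => c ^ s * (φ - θ) ^ s) volume (φ - h) φ := by
    have := (intervalIntegrable_rpow' (a := h) (b := 0) hs).comp_sub_left φ
    simp only [sub_zero] at this
    exact this.const_mul _
  have e : ∫ θ in (φ - h)..φ, c ^ s * (φ - θ) ^ s = c ^ s * (h ^ (s + 1) / (s + 1)) := by
    rw [intervalIntegral.integral_const_mul,
      intervalIntegral.integral_comp_sub_left (fun x => x ^ s) φ, sub_self, sub_sub_cancel,
      integral_rpow (Or.inl hs), Real.zero_rpow (by linarith), sub_zero]
  rw [← e, ← Real.norm_eq_abs]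
  refine norm_integral_le_of_norm_le (by linarith) (Filter.Eventually.of_forall fun θ hθ => ?_) hi
  have hθ0 : 0 ≤ θ := by linarith [hθ.1]
  have hu : 0 ≤ Real.cos θ - Real.cos φ :=
    le_trans (mul_nonneg hc.le (by linarith [hθ.2])) (H θ hθ0 hθ.2)
  have hp := Real.rpow_nonneg hu s
  rw [norm_mul, Real.norm_of_nonneg hp]
  refine le_trans (mul_le_of_le_one_right hp (Real.abs_cos_le_one _)) ?_
  rcases hθ.2.eq_or_lt with e | e
  · subst e
    rcases hs0.eq_or_lt with e | e
    · subst e; simp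
    · simp [Real.zero_rpow e.ne]
  · exact aux_dom c _ _ s hc hs0 (by linarith) (H θ hθ0 hθ.2)

lemma aux_base (φ s : ℝ) (h0 : 0 < φ) (h1 : φ < Real.pi) (hs : -1 < s) (hs0 : s ≤ 0) :
    ∃ A > 0, ∀ m : ℕ, |auxJ φ s m| ≤ A * ((m : ℝ) + 1) ^ (-s - 1) := by
  obtain ⟨c, hc, H⟩ := aux_lower φ h0 h1
  have hcs : 0 < c ^ s := Real.rpow_pos_of_pos hc _
  have hs1 : 0 < s + 1 := by linarith
  have hf1 : 0 < φ ^ (s + 1) := Real.rpow_pos_of_pos h0 _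
  have hf2 : 0 < φ ^ s := Real.rpow_pos_of_pos h0 _
  refine ⟨c ^ s * (φ ^ (s + 1) / (s + 1)) + 4 * (c ^ s * φ ^ s), by positivity, fun m => ?_⟩
  have hN : (0:ℝ) < (m : ℝ) + 1 := by positivity
  set N : ℝ := (m : ℝ) + 1 with hNd
  have hh : 0 < φ / N := by positivity
  have hh' : φ / N ≤ φ := div_le_self h0.le (by rw [hNd]; linarith [(Nat.cast_nonneg m : (0:ℝ) ≤ m)])
  have near := aux_near φ s c h0 h1 hs hs0 hc H m (φ / N) hh hh'
  have r1 : (φ / N) ^ (s + 1) = φ ^ (s + 1) * N ^ (-s - 1) := by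
    rw [Real.div_rpow h0.le hN.le, show -s - 1 = -(s + 1) by ring, Real.rpow_neg hN.le]
    rfl
  have r2 : (φ / N) ^ s = φ ^ s * (N ^ (-s - 1) * N) := by
    rw [Real.div_rpow h0.le hN.le, ← Real.rpow_add_one hN.ne', show -s - 1 + 1 = -s by ring,
      Real.rpow_neg hN.le]
    rfl
  have hNp : 0 < N ^ (-s - 1) := Real.rpow_pos_of_pos hN _
  rw [r1] at near
  have hfar : |∫ θ in (0:ℝ)..(φ - φ / N), (Real.cos θ - Real.cos φ) ^ s * Real.cos (m * θ)|
      ≤ 4 * (c ^ s * φ ^ s) * N ^ (-s - 1) := by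
    rcases Nat.eq_zero_or_pos m with hm | hm
    · have : φ - φ / N = 0 := by simp [hNd, hm]
      rw [this, integral_same, abs_zero]
      positivity
    · have hm1 : (1:ℝ) ≤ m := by exact_mod_cast hm
      have far := aux_far φ s h1 hs0 m (φ - φ / N) (by linarith) (by linarith)
      have d := aux_dom c (φ / N) _ s hc hs0 hh
        (by simpa using H (φ - φ / N) (by linarith) (by linarith))
      rw [r2] at d
      have hX : 0 < c ^ s * φ ^ s * N ^ (-s - 1) := by positivity
      have hm2 : N ≤ 2 * m := by rw [hNd]; linarith
      have : (m : ℝ) * |∫ θ in (0:ℝ)..(φ - φ / N), (Real.cos θ - Real.cos φ) ^ s * Real.cos (m * θ)|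
          ≤ m * (4 * (c ^ s * φ ^ s) * N ^ (-s - 1)) := by
        have := mul_le_mul_of_nonneg_left hm2 hX.le
        nlinarith
      exact le_of_mul_le_mul_left this (by linarith)
  have split : auxJ φ s m = (∫ θ in (0:ℝ)..(φ - φ / N), (Real.cos θ - Real.cos φ) ^ s * Real.cos (m * θ))
      + ∫ θ in (φ - φ / N)..φ, (Real.cos θ - Real.cos φ) ^ s * Real.cos (m * θ) := by
    have hi := aux_intg_mul φ s h0 h1 hs (fun θ => Real.cos (m * θ)) (by fun_prop)
    unfold auxJ
    rw [integral_add_adjacent_intervals]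
    · refine hi.mono_set ?_
      rw [Set.uIcc_of_le h0.le, Set.uIcc_of_le (by linarith)]
      exact Set.Icc_subset_Icc le_rfl (by linarith)
    · refine hi.mono_set ?_
      rw [Set.uIcc_of_le h0.le, Set.uIcc_of_le (by linarith)]
      exact Set.Icc_subset_Icc (by linarith) le_rfl
  rw [split]
  refine (abs_add_le _ _).trans ?_
  have e : c ^ s * (φ ^ (s + 1) * N ^ (-s - 1) / (s + 1))
      = c ^ s * (φ ^ (s + 1) / (s + 1)) * N ^ (-s - 1) := by ring
  rw [e] at near
  linarith

lemma aux_all (φ : ℝ) (h0 : 0 < φ) (h1 : φ < Real.pi) (n : ℕ) : ∀ s : ℝ, -1 < s → s ≤ n →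
    ∃ A > 0, ∀ m : ℕ, |auxJ φ s m| ≤ A * ((m : ℝ) + 1) ^ (-s - 1) := by
  induction n with
  | zero => intro s hs hs0; exact aux_base φ s h0 h1 hs (by simpa using hs0)
  | succ n ih =>
    intro s hs hsn
    by_cases hs0 : s ≤ 0
    · exact aux_base φ s h0 h1 hs hs0
    push Not at hs0
    obtain ⟨A, hA, HA⟩ := ih (s - 1) (by linarith) (by push_cast at hsn; linarith)
    have h2 : (0:ℝ) < 2 ^ (s + 1) := by positivity
    refine ⟨|auxJ φ s 0| + s * A * 2 ^ (s + 1), by positivity, fun m => ?_⟩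
    rcases m with _ | m
    · simp; positivity
    have hM : (0:ℝ) < (m : ℝ) + 1 := by positivity
    have hr := aux_rec φ s h0 h1 hs0 m
    have b1 := HA m
    have b2 := HA (m + 2)
    rw [show -(s - 1) - 1 = -s by ring] at b1 b2
    have mono : (((m + 2 : ℕ) : ℝ) + 1) ^ (-s) ≤ ((m : ℝ) + 1) ^ (-s) :=
      Real.rpow_le_rpow_of_nonpos hM (by push_cast; linarith) (by linarith)
    have b2' := b2.trans (mul_le_mul_of_nonneg_left mono hA.le)
    have t : ((m : ℝ) + 1) * |auxJ φ s (m + 1)| ≤ s * A * ((m : ℝ) + 1) ^ (-s) := by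
      have : ((m : ℝ) + 1) * |auxJ φ s (m + 1)|
          = s / 2 * |auxJ φ (s - 1) m - auxJ φ (s - 1) (m + 2)| := by
        push_cast at hr
        rw [← abs_of_pos hM, ← abs_mul, hr, abs_mul, abs_of_pos (by positivity : 0 < s / 2)]
      rw [this]
      have := abs_sub (auxJ φ (s - 1) m) (auxJ φ (s - 1) (m + 2))
      have := mul_le_mul_of_nonneg_left (this.trans (add_le_add b1 b2'))
        (by positivity : 0 ≤ s / 2)
      linarith
    have t2 : |auxJ φ s (m + 1)| ≤ s * A * ((m : ℝ) + 1) ^ (-s - 1) := by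
      rw [Real.rpow_sub_one hM.ne', ← mul_div_assoc, le_div_iff₀ hM]
      linarith
    have t3 : ((m : ℝ) + 1) ^ (-s - 1) ≤ 2 ^ (s + 1) * (((m + 1 : ℕ) : ℝ) + 1) ^ (-s - 1) := by
      have q : (2 * ((m : ℝ) + 1)) ^ (-s - 1) ≤ (((m + 1 : ℕ) : ℝ) + 1) ^ (-s - 1) :=
        Real.rpow_le_rpow_of_nonpos (by positivity) (by push_cast; linarith) (by linarith)
      rw [Real.mul_rpow (by norm_num) hM.le] at q
      have q2 := mul_le_mul_of_nonneg_left q h2.le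
      rw [← mul_assoc, ← Real.rpow_add (by norm_num)] at q2
      simpa using q2
    have hp : 0 ≤ (((m + 1 : ℕ) : ℝ) + 1) ^ (-s - 1) := by positivity
    have t4 := mul_le_mul_of_nonneg_left t3 (by positivity : 0 ≤ s * A)
    have t5 := mul_nonneg (abs_nonneg (auxJ φ s 0)) hp
    nlinarith

lemma aux_split (φ s : ℝ) (h0 : 0 < φ) (h1 : φ < Real.pi) (hs : 0 < s) (m : ℕ) :
    ∫ θ in (0:ℝ)..Real.pi, |Real.cos θ - Real.cos φ| ^ s * Real.cos (m * θ)
      = auxJ φ s m + (-1) ^ m * auxJ (Real.pi - φ) s m := by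
  have hc : Continuous (fun θ => |Real.cos θ - Real.cos φ| ^ s * Real.cos (m * θ)) :=
    ((Real.continuous_cos.sub continuous_const).abs.rpow_const
      (fun _ => Or.inr hs.le)).mul (by fun_prop)
  rw [← integral_add_adjacent_intervals (hc.intervalIntegrable 0 φ) (hc.intervalIntegrable φ _)]
  congr 1
  · unfold auxJ
    refine integral_congr (fun θ hθ => ?_)
    rw [Set.uIcc_of_le h0.le] at hθ
    rw [abs_of_nonneg (sub_nonneg.2 (Real.cos_le_cos_of_nonneg_of_le_pi hθ.1 h1.le hθ.2))]
  · have := intervalIntegral.integral_comp_sub_left (a := 0) (b := Real.pi - φ)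
      (fun θ => |Real.cos θ - Real.cos φ| ^ s * Real.cos (m * θ)) Real.pi
    rw [sub_zero, sub_sub_cancel] at this
    rw [← this]
    unfold auxJ
    rw [← intervalIntegral.integral_const_mul]
    refine integral_congr (fun θ hθ => ?_)
    rw [Set.uIcc_of_le (by linarith)] at hθ
    have q := Real.cos_le_cos_of_nonneg_of_le_pi hθ.1 (by linarith) hθ.2
    rw [Real.cos_pi_sub] at q
    rw [Real.cos_pi_sub, Real.cos_pi_sub, mul_sub, Real.cos_nat_mul_pi_sub,
      show -Real.cos θ - Real.cos φ = -(Real.cos θ - -Real.cos φ) by ring, abs_neg,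
      abs_of_nonneg (by linarith)]
    ring

/-- For `s > 0` and `-1 < ξ < 1`, the function `f_s(x) = |x - ξ|^s` is of class `X^s`:
its Chebyshev coefficients satisfy `|a_m| ≤ A·m^{-s-1}` for all `m ≥ 1`. -/
theorem abs_pow_class_Xs (s ξ : ℝ) (hs : 0 < s) (hξ : -1 < ξ) (hξ' : ξ < 1) :
    ∃ A > 0, ∀ m : ℕ, 1 ≤ m →
      |chebCoeff (fun x => |x - ξ| ^ s) m| ≤ A * (m : ℝ) ^ (-s - 1) := by
  have hpi := Real.pi_pos
  have h0 : 0 < Real.arccos ξ := Real.arccos_pos.2 hξ'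
  have h1 : Real.arccos ξ < Real.pi := by
    refine lt_of_le_of_ne (Real.arccos_le_pi _) (fun h => ?_)
    rw [Real.arccos_eq_pi] at h
    linarith
  have e : Real.cos (Real.arccos ξ) = ξ := Real.cos_arccos hξ.le hξ'.le
  set φ := Real.arccos ξ with hφ
  obtain ⟨n, hn⟩ := exists_nat_ge s
  obtain ⟨A, hA, HA⟩ := aux_all φ h0 h1 n s (by linarith) hn
  obtain ⟨B, hB, HB⟩ := aux_all (Real.pi - φ) (by linarith) (by linarith) n s (by linarith) hn
  refine ⟨2 / Real.pi * (A + B), by positivity, fun m hm => ?_⟩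
  have hm0 : (0:ℝ) < m := by exact_mod_cast hm
  have mono : ((m : ℝ) + 1) ^ (-s - 1) ≤ (m : ℝ) ^ (-s - 1) :=
    Real.rpow_le_rpow_of_nonpos hm0 (by linarith) (by linarith)
  unfold chebCoeff
  have sp := aux_split φ s h0 h1 hs m
  rw [e] at sp
  beta_reduce
  rw [sp, abs_mul, abs_of_pos (by positivity : 0 < 2 / Real.pi), mul_assoc]
  refine mul_le_mul_of_nonneg_left ?_ (by positivity)
  refine (abs_add_le _ _).trans ?_
  rw [abs_mul, abs_pow, abs_neg, abs_one, one_pow, one_mul, add_mul]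
  exact add_le_add ((HA m).trans (mul_le_mul_of_nonneg_left mono hA.le))
    ((HB m).trans (mul_le_mul_of_nonneg_left mono hB.le))
end
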